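/- arXiv:1512.04041 — 2 statements merged into one kernel-verified Lean document; each statement's English description precedes it below -/
import Mathlib

section
/- Let a = (a_n)_{n≥1} be a non-ultimately periodic sequence over F_q[T] with deg a_n ≥ 1 for all n ≥ 1. Assume that the sequence (|a_n|)_{n≥1} is bounded and that limsup_{n→∞} p(a, n)/n < +∞. Set ξ := [0, a_1, a_2, …] ∈ F_q((T^{-1})). Then the Diophantine exponent Dio(a) is finite if and only if ξ is not a U_2-number, i.e., if and only if it is not the case that w_2(ξ) = +∞ while w_1(ξ) < +∞. -/
open Polynomial Filter
open scoped ENNReal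

noncomputable section

namespace Ooto

variable (Fq : Type) [Field Fq] [Fintype Fq]

/-- `F_q((T⁻¹))`, realized as formal Laurent series in the variable `X = T⁻¹`. -/
abbrev K := LaurentSeries Fq

/-- The element `T = X⁻¹` of `F_q((T⁻¹))`. -/
def TT : K Fq := HahnSeries.single (-1 : ℤ) (1 : Fq)

/-- The natural embedding of `F_q[T]` into `F_q((T⁻¹))`, sending `T` to `T`. -/
def polyToK : Polynomial Fq →+* K Fq := Polynomial.eval₂RingHom HahnSeries.C (TT Fq)

open Classical in
/-- The absolute value on `F_q((T⁻¹))`: `|0| = 0` and `|ξ| = q^{-N}` where `N` is the order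
of `ξ` as a series in `T⁻¹`. -/
def kabs (f : K Fq) : ℝ := if f = 0 then 0 else (Fintype.card Fq : ℝ) ^ (-f.order)

/-- A fixed algebraic closure of `F_q((T⁻¹))`. -/
abbrev L := AlgebraicClosure (K Fq)

def toL : K Fq →+* L Fq := algebraMap (K Fq) (L Fq)

def φ : Polynomial Fq →+* L Fq := (toL Fq).comp (polyToK Fq)

/-- Evaluation of `P ∈ (F_q[T])[X]` at `ξ ∈ F_q((T⁻¹))`. -/
def evalK (P : Polynomial (Polynomial Fq)) (ξ : K Fq) : K Fq :=
  Polynomial.eval₂ (polyToK Fq) ξ P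

/-- Evaluation of `P ∈ (F_q[T])[X]` at a point of the algebraic closure. -/
def evalL (P : Polynomial (Polynomial Fq)) (α : L Fq) : L Fq :=
  Polynomial.eval₂ (φ Fq) α P

/-- Height of a polynomial over `F_q[T]`: the maximum of the absolute values of its
coefficients. -/
def Hpoly (P : Polynomial (Polynomial Fq)) : ℝ := ⨆ i : ℕ, kabs Fq (polyToK Fq (P.coeff i))

/-- `P` is the minimal polynomial of `α`: a non-constant irreducible primitive polynomial in
`(F_q[T])[X]` whose leading coefficient is monic in `T`, vanishing at `α`. -/
def IsMinPolyOf (P : Polynomial (Polynomial Fq)) (α : L Fq) : Prop :=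
  0 < P.natDegree ∧ Irreducible P ∧ P.IsPrimitive ∧ (P.leadingCoeff).Monic ∧ evalL Fq P α = 0

/-- `α` is algebraic over `F_q(T)`. -/
def IsAlgElem (α : L Fq) : Prop := ∃ P, IsMinPolyOf Fq P α

open Classical in
/-- The minimal polynomial of an algebraic element (junk value `0` otherwise). -/
def minPolyPrim (α : L Fq) : Polynomial (Polynomial Fq) :=
  if h : IsAlgElem Fq α then h.choose else 0

/-- Degree of an algebraic element. -/
def degAlg (α : L Fq) : ℕ := (minPolyPrim Fq α).natDegree

/-- Height of an algebraic element. -/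
def heightAlg (α : L Fq) : ℝ := Hpoly Fq (minPolyPrim Fq α)

/-- Inseparable degree of a polynomial `P ∈ (F_q[T])[X]`: the largest power `f = p^j` of the
characteristic such that `P(X) = R(X^f)` for some `R`. -/
def insepDeg (P : Polynomial (Polynomial Fq)) : ℕ :=
  (ringChar Fq) ^ sSup {j : ℕ | ∃ R : Polynomial (Polynomial Fq),
    P = R.comp (Polynomial.X ^ (ringChar Fq) ^ j)}

/-- Inseparable degree of an algebraic element. -/
def insepAlg (α : L Fq) : ℕ := insepDeg Fq (minPolyPrim Fq α)

/-- `α'` is the Galois conjugate of the quadratic element `α` (equal to `α` itself in the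
inseparable case): the minimal polynomial of `α` factors as `A(X - α)(X - α')`. -/
def IsConjOf (α' α : L Fq) : Prop :=
  (minPolyPrim Fq α).natDegree = 2 ∧
  (minPolyPrim Fq α).map (φ Fq) =
    Polynomial.C (φ Fq (minPolyPrim Fq α).leadingCoeff) *
      (Polynomial.X - Polynomial.C α) * (Polynomial.X - Polynomial.C α')

/-- `v` is an absolute value on the algebraic closure of `F_q((T⁻¹))` extending `kabs`
(such an extension exists and is unique). -/
structure IsAbsExt (v : L Fq → ℝ) : Prop where
  eq_zero_iff : ∀ x, v x = 0 ↔ x = 0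
  map_mul : ∀ x y, v (x * y) = v x * v y
  add_le : ∀ x y, v (x + y) ≤ max (v x) (v y)
  nonneg : ∀ x, 0 ≤ v x
  extends_kabs : ∀ f : K Fq, v (toL Fq f) = kabs Fq f

/-- The exponent `w_n(ξ)`: the supremum of the real numbers `w` such that
`0 < |P(ξ)| ≤ H(P)^{-w}` for infinitely many `P ∈ (F_q[T])[X]` of degree at most `n`. -/
def wExp (n : ℕ) (ξ : K Fq) : EReal :=
  sSup {x : EReal | ∃ w : ℝ, x = (w : EReal) ∧
    {P : Polynomial (Polynomial Fq) | P.natDegree ≤ n ∧ 0 < kabs Fq (evalK Fq P ξ) ∧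
      kabs Fq (evalK Fq P ξ) ≤ Hpoly Fq P ^ (-w)}.Infinite}

/-- The exponent `w_n^*(ξ)`: the supremum of the real numbers `w` such that
`0 < |ξ - α| ≤ H(α)^{-w-1}` for infinitely many algebraic `α` of degree at most `n`. -/
def wStarExp (v : L Fq → ℝ) (n : ℕ) (ξ : K Fq) : EReal :=
  sSup {x : EReal | ∃ w : ℝ, x = (w : EReal) ∧
    {α : L Fq | IsAlgElem Fq α ∧ degAlg Fq α ≤ n ∧ 0 < v (toL Fq ξ - α) ∧
      v (toL Fq ξ - α) ≤ heightAlg Fq α ^ (-w - 1)}.Infinite}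

/-- `pSeq a n = p_{n-1}`, the numerators of the convergents of `[a 0; a 1, a 2, …]`
(with `p_{-1} = 1`). -/
def pSeq (a : ℕ → Polynomial Fq) : ℕ → Polynomial Fq
  | 0 => 1
  | 1 => a 0
  | (n+2) => a (n+1) * pSeq a (n+1) + pSeq a n

/-- `qSeq a n = q_{n-1}`, the denominators of the convergents of `[a 0; a 1, a 2, …]`
(with `q_{-1} = 0`). -/
def qSeq (a : ℕ → Polynomial Fq) : ℕ → Polynomial Fq
  | 0 => 0
  | 1 => 1
  | (n+2) => a (n+1) * qSeq a (n+1) + qSeq a n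

/-- `ξ` has continued fraction expansion `[a 0; a 1, a 2, …]`: each partial quotient `a n`
(`n ≥ 1`) has degree at least one and `|ξ - p_n/q_n| = |q_n|⁻¹|q_{n+1}|⁻¹` for all `n ≥ 0`. -/
def IsCFOf (ξ : K Fq) (a : ℕ → Polynomial Fq) : Prop :=
  (∀ n, 1 ≤ n → 1 ≤ (a n).natDegree) ∧
  ∀ n : ℕ,
    kabs Fq (ξ - polyToK Fq (pSeq Fq a (n+1)) / polyToK Fq (qSeq Fq a (n+1))) =
      (kabs Fq (polyToK Fq (qSeq Fq a (n+1))) * kabs Fq (polyToK Fq (qSeq Fq a (n+2))))⁻¹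

/-- The sequence of partial quotients of `[0; b 0, b 1, b 2, …]`. -/
def cfA (b : ℕ → Polynomial Fq) : ℕ → Polynomial Fq := fun n => if n = 0 then 0 else b (n - 1)

/-- `qden b n` is the denominator `q_n` of the `n`-th convergent of `[0; b 0, b 1, …]`. -/
def qden (b : ℕ → Polynomial Fq) (n : ℕ) : Polynomial Fq := qSeq Fq (cfA Fq b) (n + 1)

/-- `V^w` for a finite word `V` and a real `w ≥ 0`: `⌊w⌋` copies of `V` followed by the prefix
of `V` of length `⌈(w - ⌊w⌋)|V|⌉`. -/
def wordPow {A : Type*} (V : List A) (w : ℝ) : List A :=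
  (List.replicate ⌊w⌋₊ V).flatten ++ V.take ⌈(w - ⌊w⌋₊) * V.length⌉₊

/-- The finite word `l` is a prefix of the infinite word `b`. -/
def IsPrefixOfSeq {A : Type*} (l : List A) (b : ℕ → A) : Prop :=
  ∀ (i : ℕ) (h : i < l.length), l.get ⟨i, h⟩ = b i

/-- Condition `(*)_ρ` for an infinite word. -/
def SatisfiesCond {A : Type*} (b : ℕ → A) (ρ : ℝ) : Prop :=
  ∃ (U V : ℕ → List A) (w : ℕ → ℝ),
    (∀ n, V n ≠ []) ∧ (∀ n, 0 ≤ w n) ∧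
    (∀ n, IsPrefixOfSeq (U n ++ wordPow (V n) (w n)) b) ∧
    (∀ n, ρ * (((U n).length + (V n).length : ℕ) : ℝ) ≤
      (((U n).length + (wordPow (V n) (w n)).length : ℕ) : ℝ)) ∧
    StrictMono fun n => (wordPow (V n) (w n)).length

/-- The Diophantine exponent of an infinite word: the supremum of the `ρ` such that the word
satisfies Condition `(*)_ρ`. -/
def dioExp {A : Type*} (b : ℕ → A) : EReal :=
  sSup {x : EReal | ∃ ρ : ℝ, x = (ρ : EReal) ∧ SatisfiesCond b ρ}

/-- The complexity function: the number of distinct blocks of `n` consecutive letters. -/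
def complexity {A : Type*} (b : ℕ → A) (n : ℕ) : ℕ∞ :=
  {w : Fin n → A | ∃ i : ℕ, ∀ k : Fin n, w k = b (i + k)}.encard

/-- The infinite word `b` is ultimately periodic. -/
def UltimatelyPeriodic {A : Type*} (b : ℕ → A) : Prop :=
  ∃ N T : ℕ, 0 < T ∧ ∀ n, N ≤ n → b (n + T) = b n

/-!
Bounded partial quotients make `ξ` badly approximable, so `w_1(ξ)` is finite, and the question is
whether `w_2(ξ)` is. A repetition of length `m` in the partial quotients, starting at the positions
`i < j`, yields a quadratic polynomial `Q` (`coincidenceForm`) with `H(Q) ≪ |q_i q_j|` and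
`|Q(ξ)| ≍ |q_{i+m} q_{j+m}|⁻¹` up to bounded factors when the repetition is maximal.

If `Dio(a) = ∞`, there are such repetitions with `m / j` arbitrarily large; as `log H(Q) ≪ j` and
`-log |Q(ξ)| ≫ m`, this forces `w_2(ξ) = ∞`.

If `Dio(a) < ∞`, linear complexity and the pigeonhole principle give, for each large `n`, a maximal
repetition with `j ≪ n ≤ m ≪ j`. Its polynomial satisfies `H(Q)|Q(ξ)| ≪ 4⁻ⁿ` while
`H(Q)/|Q(ξ)|` is at most exponential in `n`. Given any `P` of degree at most `2`, choose `n` with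
`4ⁿ` just above a multiple of `H(P)²`. Eliminating `X²` between `P` and `Q` produces a polynomial of
degree at most `1`, and bad approximability prevents `Q(ξ)` from dominating it. Hence
`|P(ξ)| ≥ |Q(ξ)|/H(Q)`, which is bounded below by a fixed power of `H(P)`.
-/

section Words

variable {A : Type*} {b : ℕ → A}

/-- The blocks of length `m` of the word `b` at positions `i` and `j` coincide. Repetitions in `b`
are recorded in this form: for `i < j` it says that the block of length `m + (j - i)` at `i` has
period `j - i`. -/
def BlocksAgree (b : ℕ → A) (i j m : ℕ) : Prop :=
  ∀ k < m, b (i + k) = b (j + k)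

lemma BlocksAgree.apply_add_mod {i s m k : ℕ} (h : BlocksAgree b i (i + s) m) (hk : k < s + m) :
    b (i + k % s) = b (i + k) := by
  induction k using Nat.strong_induction_on with
  | _ k ih =>
    rcases lt_or_ge k s with hks | hsk
    · rw [Nat.mod_eq_of_lt hks]
    · obtain rfl | hs := Nat.eq_zero_or_pos s
      · rw [Nat.mod_zero]
      · rw [Nat.mod_eq_sub_mod hsk, ih (k - s) (by omega) (by omega), h (k - s) (by omega)]
        congr 1
        omega

lemma exists_first_disagreement (hb : ¬ UltimatelyPeriodic b) {i j : ℕ} (hij : i < j) :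
    ∃ m, BlocksAgree b i j m ∧ b (i + m) ≠ b (j + m) := by
  classical
  have hex : ∃ m, b (i + m) ≠ b (j + m) := by
    by_contra! hall
    refine hb ⟨i, j - i, by omega, fun n hn => ?_⟩
    have h := hall (n - i)
    rw [show i + (n - i) = n by omega, show j + (n - i) = n + (j - i) by omega] at h
    exact h.symm
  exact ⟨Nat.find hex, fun k hk => not_not.1 (Nat.find_min hex hk), Nat.find_spec hex⟩

lemma getElem?_flatten_replicate (V : List A) {n i : ℕ} (hi : i < n * V.length) :
    (List.replicate n V).flatten[i]? = V[i % V.length]? := by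
  induction n generalizing i with
  | zero => simp at hi
  | succ n ih =>
    rw [List.replicate_succ, List.flatten_cons]
    rcases lt_or_ge i V.length with h | h
    · rw [List.getElem?_append_left h, Nat.mod_eq_of_lt h]
    · rw [List.getElem?_append_right h, ih (by rw [Nat.succ_mul] at hi; omega),
        Nat.mod_eq_sub_mod h]

lemma getElem?_wordPow (V : List A) (w : ℝ) {i : ℕ} (hi : i < (wordPow V w).length) :
    (wordPow V w)[i]? = V[i % V.length]? := by
  have hlen : (List.replicate ⌊w⌋₊ V).flatten.length = ⌊w⌋₊ * V.length := by simp
  unfold wordPow at hi ⊢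
  rcases lt_or_ge i (⌊w⌋₊ * V.length) with h | h
  · rw [List.getElem?_append_left (by rwa [hlen]), getElem?_flatten_replicate V h]
  · rw [List.length_append, hlen, List.length_take] at hi
    rw [List.getElem?_append_right (by rwa [hlen]), hlen, List.getElem?_take_of_lt (by omega)]
    obtain ⟨k, rfl⟩ := Nat.exists_eq_add_of_le h
    rw [Nat.add_sub_cancel_left, Nat.mul_add_mod_self_right, Nat.mod_eq_of_lt (by omega)]

lemma length_wordPow_natCast (V : List A) (n : ℕ) :
    (wordPow V (n : ℝ)).length = n * V.length := by
  simp [wordPow]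

lemma isPrefixOfSeq_iff_getElem? {l : List A} :
    IsPrefixOfSeq l b ↔ ∀ i < l.length, l[i]? = some (b i) := by
  refine forall_congr' fun i => forall_congr' fun h => ?_
  rw [List.getElem?_eq_getElem h, Option.some_inj, List.get_eq_getElem]

lemma isPrefixOfSeq_append_wordPow_iff {U V : List A} {w : ℝ} :
    IsPrefixOfSeq (U ++ wordPow V w) b ↔ IsPrefixOfSeq U b ∧
      ∀ k < (wordPow V w).length, V[k % V.length]? = some (b (U.length + k)) := by
  simp only [isPrefixOfSeq_iff_getElem?, List.length_append]
  constructor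
  · refine fun h => ⟨fun i hi => ?_, fun k hk => ?_⟩
    · rw [← h i (by omega), List.getElem?_append_left hi]
    · rw [← h (U.length + k) (by omega), List.getElem?_append_right (by omega),
        Nat.add_sub_cancel_left, getElem?_wordPow V w hk]
  · rintro ⟨hU, hV⟩ i hi
    rcases lt_or_ge i U.length with h | h
    · rw [List.getElem?_append_left h, hU i h]
    · obtain ⟨k, rfl⟩ := Nat.exists_eq_add_of_le h
      have hk : k < (wordPow V w).length := by omega
      rw [List.getElem?_append_right h, Nat.add_sub_cancel_left, getElem?_wordPow V w hk, hV k hk]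

lemma blocksAgree_of_isPrefixOfSeq {U V : List A} {w : ℝ}
    (h : IsPrefixOfSeq (U ++ wordPow V w) b) :
    BlocksAgree b U.length (U.length + V.length) ((wordPow V w).length - V.length) := by
  intro k hk
  have hV := (isPrefixOfSeq_append_wordPow_iff.1 h).2
  have hshift := hV (V.length + k) (by omega)
  rw [Nat.add_mod_left, hV k (by omega), Option.some_inj] at hshift
  rw [hshift, add_assoc]

lemma BlocksAgree.isPrefixOfSeq {i s m n : ℕ} (hs : 0 < s) (h : BlocksAgree b i (i + s) m)
    (hn : n * s ≤ s + m) :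
    IsPrefixOfSeq (List.ofFn (fun k : Fin i => b k) ++
      wordPow (List.ofFn fun k : Fin s => b (i + k)) n) b := by
  rw [isPrefixOfSeq_append_wordPow_iff, length_wordPow_natCast]
  simp only [List.length_ofFn]
  refine ⟨fun k hk => by simp, fun k hk => ?_⟩
  rw [List.getElem?_ofFn, dif_pos (Nat.mod_lt k hs), h.apply_add_mod (by omega)]

lemma SatisfiesCond.anti {ρ σ : ℝ} (hρσ : ρ ≤ σ) (h : SatisfiesCond b σ) : SatisfiesCond b ρ := by
  obtain ⟨U, V, w, hV, hw, hpre, hlen, hmono⟩ := h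
  exact ⟨U, V, w, hV, hw, hpre,
    fun n => (mul_le_mul_of_nonneg_right hρσ (Nat.cast_nonneg _)).trans (hlen n), hmono⟩

lemma satisfiesCond_of_forall_exists {ρ : ℝ}
    (h : ∀ N : ℕ, ∃ (U V : List A) (w : ℝ), V ≠ [] ∧ 0 ≤ w ∧ IsPrefixOfSeq (U ++ wordPow V w) b ∧
      ρ * (U.length + V.length : ℕ) ≤ (U.length + (wordPow V w).length : ℕ) ∧
      N ≤ (wordPow V w).length) :
    SatisfiesCond b ρ := by
  choose U V w hV hw hpre hlen hlarge using h
  obtain ⟨f, -, hf⟩ := strictMono_subseq_of_tendsto_atTop (tendsto_atTop_mono hlarge tendsto_id)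
  exact ⟨U ∘ f, V ∘ f, w ∘ f, fun n => hV _, fun n => hw _, fun n => hpre _, fun n => hlen _, hf⟩

lemma SatisfiesCond.exists_blocksAgree {ρ : ℕ} (hρ : 1 ≤ ρ) (h : SatisfiesCond b (ρ + 1 : ℕ))
    (N : ℕ) : ∃ i j m : ℕ, i < j ∧ N ≤ m ∧ ρ * j ≤ m ∧ BlocksAgree b i j m := by
  obtain ⟨U, V, w, hV, -, hpre, hlen, hmono⟩ := h
  set n := 2 * N
  have hn : n ≤ (wordPow (V n) (w n)).length := hmono.le_apply
  have hVpos : 0 < (V n).length := List.length_pos_iff.2 (hV n)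
  have hlen : (ρ + 1) * ((U n).length + (V n).length) ≤
      (U n).length + (wordPow (V n) (w n)).length := by
    exact_mod_cast hlen n
  have hmul := Nat.mul_le_mul_right ((U n).length + (V n).length) hρ
  rw [add_one_mul] at hlen
  exact ⟨_, _, _, by omega, by omega, by omega, blocksAgree_of_isPrefixOfSeq (hpre n)⟩

lemma satisfiesCond_of_blocksAgree {ρ : ℕ}
    (h : ∀ N : ℕ, ∃ i j m : ℕ, i < j ∧ N ≤ m ∧ ρ * j ≤ m ∧ BlocksAgree b i j m) :
    SatisfiesCond b ρ := by
  refine satisfiesCond_of_forall_exists fun N => ?_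
  obtain ⟨i, j, m, hij, hN, hρ, hagree⟩ := h N
  obtain ⟨s, rfl⟩ := Nat.exists_eq_add_of_le hij.le
  have hs : 0 < s := by omega
  have hle : (s + m) / s * s ≤ s + m := Nat.div_mul_le_self _ _
  have hlt : s + m < (s + m) / s * s + s := Nat.lt_div_mul_add hs
  refine ⟨_, _, ((s + m) / s : ℕ), ?_, Nat.cast_nonneg _, hagree.isPrefixOfSeq hs hle, ?_, ?_⟩
  · exact List.ne_nil_of_length_pos (by rwa [List.length_ofFn])
  · rw [length_wordPow_natCast, List.length_ofFn, List.length_ofFn]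
    exact_mod_cast (by omega : ρ * (i + s) ≤ i + (s + m) / s * s)
  · rw [length_wordPow_natCast, List.length_ofFn]
    omega

lemma dioExp_eq_top_iff_forall_satisfiesCond :
    dioExp b = ⊤ ↔ ∀ ρ : ℕ, SatisfiesCond b ρ := by
  rw [EReal.eq_top_iff_forall_lt]
  constructor
  · intro h ρ
    obtain ⟨_, ⟨σ, rfl, hσ⟩, hlt⟩ := lt_sSup_iff.1 (h ρ)
    exact hσ.anti (EReal.coe_le_coe_iff.1 hlt.le)
  · intro h y
    obtain ⟨ρ, hρ⟩ := exists_nat_gt y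
    exact (EReal.coe_lt_coe_iff.2 hρ).trans_le (le_sSup ⟨ρ, rfl, h ρ⟩)

lemma dioExp_eq_top_iff_blocksAgree :
    dioExp b = ⊤ ↔
      ∀ ρ N : ℕ, ∃ i j m : ℕ, i < j ∧ N ≤ m ∧ ρ * j ≤ m ∧ BlocksAgree b i j m := by
  rw [dioExp_eq_top_iff_forall_satisfiesCond]
  refine ⟨fun h ρ N => ?_, fun h ρ => satisfiesCond_of_blocksAgree (h ρ)⟩
  obtain ⟨i, j, m, hij, hN, hρ, hagree⟩ := (h (ρ + 1 + 1)).exists_blocksAgree (by omega) N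
  rw [add_one_mul] at hρ
  exact ⟨i, j, m, hij, hN, by omega, hagree⟩

lemma exists_complexity_le_mul
    (hb : limsup (fun n : ℕ => (complexity b n : ℝ≥0∞) / (n : ℝ≥0∞)) atTop < ⊤) :
    ∃ κ n₀ : ℕ, ∀ n ≥ n₀, complexity b n ≤ (κ * n : ℕ) := by
  obtain ⟨κ, hκ⟩ := ENNReal.exists_nat_gt hb.ne
  obtain ⟨n₀, hn₀⟩ := eventually_atTop.1 (eventually_lt_of_limsup_lt hκ)
  refine ⟨κ, n₀ + 1, fun n hn => ?_⟩
  have hle := (hn₀ n (by omega)).le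
  rw [ENNReal.div_le_iff (by simpa using by omega) (by simp)] at hle
  rw [← ENat.toENNReal_le]
  simpa using hle

lemma exists_blocksAgree_of_complexity_le {n N : ℕ} (h : complexity b n ≤ N) :
    ∃ i j : ℕ, i < j ∧ j ≤ N ∧ BlocksAgree b i j n := by
  have hcard : complexity b n < (Set.Iic N).encard := by
    refine h.trans_lt ?_
    rw [Set.encard_eq_coe_toFinset_card, Set.toFinset_Iic, Nat.card_Iic]
    exact_mod_cast N.lt_succ_self
  obtain ⟨i, hi, j, hj, hne, hij⟩ := Set.exists_ne_map_eq_of_encard_lt_of_maps_to hcard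
    (f := fun i (k : Fin n) => b (i + k)) fun i _ => ⟨i, fun _ => rfl⟩
  have hagree : BlocksAgree b i j n := fun k hk => congrFun hij ⟨k, hk⟩
  rcases lt_or_gt_of_ne hne with hlt | hlt
  · exact ⟨i, j, hlt, hj, hagree⟩
  · exact ⟨j, i, hlt, hi, fun k hk => (hagree k hk).symm⟩

/-- Pigeonhole produces an early repetition of length `n`; extending it to its maximal length `m`
costs at most a factor `ρ`, since otherwise `dioExp b` would be infinite. -/
lemma exists_maximal_repetition (hper : ¬ UltimatelyPeriodic b)
    (hcomp : limsup (fun n : ℕ => (complexity b n : ℝ≥0∞) / (n : ℝ≥0∞)) atTop < ⊤)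
    (hdio : dioExp b ≠ ⊤) :
    ∃ κ ρ n₀ : ℕ, ∀ n ≥ n₀, ∃ i j m : ℕ, i < j ∧ j ≤ κ * n ∧ n ≤ m ∧ m ≤ ρ * j ∧
      BlocksAgree b i j m ∧ b (i + m) ≠ b (j + m) := by
  obtain ⟨κ, n₁, hκ⟩ := exists_complexity_le_mul hcomp
  rw [Ne, dioExp_eq_top_iff_blocksAgree] at hdio
  push Not at hdio
  obtain ⟨ρ, N, hρ⟩ := hdio
  refine ⟨κ, ρ, n₁ + N, fun n hn => ?_⟩
  obtain ⟨i, j, hij, hj, hagree⟩ := exists_blocksAgree_of_complexity_le (hκ n (by omega))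
  obtain ⟨m, hm, hne⟩ := exists_first_disagreement hper hij
  have hnm : n ≤ m := le_of_not_gt fun hlt => hne (hagree m hlt)
  exact ⟨i, j, m, hij, hj, hnm, le_of_not_ge fun h => hρ i j m hij (by omega) h hm, hm, hne⟩

end Words

section AbsoluteValue

variable {Fq}

lemma one_lt_card : (1 : ℝ) < Fintype.card Fq := by
  exact_mod_cast Fintype.one_lt_card

lemma kabs_eq_of_ne_zero {x : K Fq} (hx : x ≠ 0) :
    kabs Fq x = (Fintype.card Fq : ℝ) ^ (-x.order) :=
  if_neg hx

lemma kabs_pos {x : K Fq} (hx : x ≠ 0) : 0 < kabs Fq x := by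
  rw [kabs_eq_of_ne_zero hx]
  exact zpow_pos (one_pos.trans one_lt_card) _

@[simp]
lemma kabs_zero : kabs Fq 0 = 0 :=
  if_pos rfl

lemma kabs_nonneg (x : K Fq) : 0 ≤ kabs Fq x := by
  obtain rfl | hx := eq_or_ne x 0
  · exact kabs_zero.ge
  · exact (kabs_pos hx).le

lemma kabs_mul (x y : K Fq) : kabs Fq (x * y) = kabs Fq x * kabs Fq y := by
  obtain rfl | hx := eq_or_ne x 0
  · simp
  obtain rfl | hy := eq_or_ne y 0
  · simp
  rw [kabs_eq_of_ne_zero hx, kabs_eq_of_ne_zero hy, kabs_eq_of_ne_zero (mul_ne_zero hx hy),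
    HahnSeries.order_mul hx hy, neg_add, zpow_add₀ (one_pos.trans one_lt_card).ne']

lemma kabs_add_le_max (x y : K Fq) : kabs Fq (x + y) ≤ max (kabs Fq x) (kabs Fq y) := by
  obtain rfl | hx := eq_or_ne x 0
  · simp
  obtain rfl | hy := eq_or_ne y 0
  · simp
  obtain hxy | hxy := eq_or_ne (x + y) 0
  · rw [hxy, kabs_zero]
    exact le_max_of_le_left (kabs_nonneg x)
  rw [kabs_eq_of_ne_zero hx, kabs_eq_of_ne_zero hy, kabs_eq_of_ne_zero hxy, le_max_iff,
    zpow_le_zpow_iff_right₀ one_lt_card, zpow_le_zpow_iff_right₀ one_lt_card,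
    neg_le_neg_iff, neg_le_neg_iff, ← min_le_iff]
  exact HahnSeries.min_order_le_order_add hxy

/-- The absolute value `kabs` of `F_q((T⁻¹))` as a bundled `AbsoluteValue`, which gives access to
the library on (nonarchimedean) absolute values. -/
def laurentAbs : AbsoluteValue (K Fq) ℝ where
  toFun := kabs Fq
  map_mul' := kabs_mul
  nonneg' := kabs_nonneg
  eq_zero' _ := ⟨fun h => by_contra fun hx => (kabs_pos hx).ne' h, fun h => h ▸ kabs_zero⟩
  add_le' x y := (kabs_add_le_max x y).trans (max_le_add_of_nonneg (kabs_nonneg x) (kabs_nonneg y))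

lemma isNonarchimedean_laurentAbs : IsNonarchimedean (laurentAbs (Fq := Fq)) :=
  kabs_add_le_max

lemma laurentAbs_TT : laurentAbs (TT Fq) = Fintype.card Fq := by
  have hT : TT Fq ≠ 0 := HahnSeries.single_ne_zero one_ne_zero
  refine (kabs_eq_of_ne_zero hT).trans ?_
  rw [TT, HahnSeries.order_single one_ne_zero, neg_neg, zpow_one]

lemma laurentAbs_C {x : Fq} (hx : x ≠ 0) : laurentAbs (HahnSeries.C x : K Fq) = 1 := by
  refine (kabs_eq_of_ne_zero (HahnSeries.C_ne_zero hx)).trans ?_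
  rw [HahnSeries.order_C, neg_zero, zpow_zero]

lemma laurentAbs_polyToK {p : Fq[X]} (hp : p ≠ 0) :
    laurentAbs (polyToK Fq p) = (Fintype.card Fq : ℝ) ^ p.natDegree := by
  have hterm {i : ℕ} (hi : p.coeff i ≠ 0) :
      laurentAbs (HahnSeries.C (p.coeff i) * TT Fq ^ i) = (Fintype.card Fq : ℝ) ^ i := by
    rw [map_mul, map_pow, laurentAbs_C hi, laurentAbs_TT, one_mul]
  have hlead := hterm (leadingCoeff_ne_zero.2 hp)
  rw [polyToK, coe_eval₂RingHom, eval₂_eq_sum_range, ← hlead]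
  refine isNonarchimedean_laurentAbs.apply_sum_eq_of_lt (fun x => (laurentAbs.map_neg x).symm)
    (by simp) ?_
  intro i hi hne
  have hlt : i < p.natDegree := by grind
  rw [hlead]
  by_cases hcoeff : p.coeff i = 0
  · rw [hcoeff, map_zero, zero_mul, map_zero]
    exact pow_pos (one_pos.trans one_lt_card) _
  · rw [hterm hcoeff]
    exact pow_lt_pow_right₀ one_lt_card hlt

lemma coeff_polyToK_neg {F : Type} [Field F] (p : F[X]) (n : ℕ) :
    (polyToK F p).coeff (-n) = p.coeff n := by
  induction p using Polynomial.induction_on' with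
  | add p r hp hr => rw [map_add, HahnSeries.coeff_add, hp, hr, coeff_add]
  | monomial m c =>
    have hmonomial : polyToK F (monomial m c) = HahnSeries.single (-m : ℤ) c := by
      simp [polyToK, TT, HahnSeries.C_apply]
    rw [hmonomial, HahnSeries.coeff_single, coeff_monomial]
    simp [eq_comm]

lemma polyToK_injective {F : Type} [Field F] : Function.Injective (polyToK F) := fun p r h => by
  ext n
  rw [← coeff_polyToK_neg, h, coeff_polyToK_neg]

/-- The restriction to `F_q[T]` of the absolute value of `F_q((T⁻¹))`. -/
def polyAbs : AbsoluteValue Fq[X] ℝ :=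
  laurentAbs.comp polyToK_injective

lemma laurentAbs_polyToK_eq_polyAbs (p : Fq[X]) : laurentAbs (polyToK Fq p) = polyAbs p :=
  rfl

lemma isNonarchimedean_polyAbs : IsNonarchimedean (polyAbs (Fq := Fq)) := fun p q => by
  rw [← laurentAbs_polyToK_eq_polyAbs, map_add]
  exact isNonarchimedean_laurentAbs _ _

lemma two_pow_natDegree_le_polyAbs {p : Fq[X]} (hp : p ≠ 0) : 2 ^ p.natDegree ≤ polyAbs p := by
  have hcard : (2 : ℝ) ≤ Fintype.card Fq := by exact_mod_cast Fintype.one_lt_card (α := Fq)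
  exact (pow_le_pow_left₀ zero_le_two hcard _).trans (laurentAbs_polyToK hp).ge

lemma one_le_polyAbs {p : Fq[X]} (hp : p ≠ 0) : 1 ≤ polyAbs p :=
  (one_le_pow₀ one_le_two).trans (two_pow_natDegree_le_polyAbs hp)

lemma two_le_polyAbs {p : Fq[X]} (hp : 1 ≤ p.natDegree) : 2 ≤ polyAbs p :=
  calc (2 : ℝ) ≤ 2 ^ p.natDegree := le_self_pow₀ one_le_two (by omega)
    _ ≤ polyAbs p := two_pow_natDegree_le_polyAbs (ne_zero_of_natDegree_gt hp)

lemma finite_setOf_natDegree_le_coeff_mem {R : Type*} [Semiring R] {S : Set R} (hS : S.Finite)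
    (n : ℕ) : {P : R[X] | P.natDegree ≤ n ∧ ∀ i, P.coeff i ∈ S}.Finite := by
  have hpi : (Set.univ.pi fun _ : Fin (n + 1) => S).Finite := Set.Finite.pi fun _ => hS
  refine Set.Finite.of_injOn (f := fun P (i : Fin (n + 1)) => P.coeff i) ?_ ?_ hpi
  · exact fun P hP i _ => hP.2 i
  · intro P hP Q hQ hPQ
    exact (ext_iff_natDegree_le hP.1 hQ.1).2 fun i hi => congrFun hPQ ⟨i, Nat.lt_succ_of_le hi⟩

lemma finite_setOf_polyAbs_le (c : ℝ) : {p : Fq[X] | polyAbs p ≤ c}.Finite := by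
  obtain ⟨n, hn⟩ := pow_unbounded_of_one_lt c one_lt_two
  refine (finite_setOf_natDegree_le_coeff_mem Set.finite_univ n).subset fun p hp => ?_
  refine ⟨?_, fun i => Set.mem_univ _⟩
  obtain rfl | hp0 := eq_or_ne p 0
  · simp
  · have hlt : (2 : ℝ) ^ p.natDegree < 2 ^ n :=
      (two_pow_natDegree_le_polyAbs hp0).trans_lt (hp.trans_lt hn)
    exact ((pow_lt_pow_iff_right₀ one_lt_two).1 hlt).le

end AbsoluteValue

section Height

variable {Fq}

lemma Hpoly_eq_gaussNorm (P : Fq[X][X]) : Hpoly Fq P = P.gaussNorm polyAbs 1 := by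
  refine le_antisymm (ciSup_le fun i => ?_) ?_
  · change polyAbs (P.coeff i) ≤ _
    simpa using P.le_gaussNorm polyAbs zero_le_one i
  · obtain ⟨i, hi⟩ := P.exists_eq_gaussNorm polyAbs 1
    rw [hi, one_pow, mul_one]
    refine le_ciSup (f := fun i => polyAbs (P.coeff i)) ⟨P.gaussNorm polyAbs 1, ?_⟩ i
    rintro _ ⟨j, rfl⟩
    simpa using P.le_gaussNorm polyAbs zero_le_one j

lemma polyAbs_coeff_le_Hpoly (P : Fq[X][X]) (i : ℕ) : polyAbs (P.coeff i) ≤ Hpoly Fq P := by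
  simpa [Hpoly_eq_gaussNorm] using P.le_gaussNorm polyAbs zero_le_one i

lemma Hpoly_C (p : Fq[X]) : Hpoly Fq (C p) = polyAbs p := by
  rw [Hpoly_eq_gaussNorm, gaussNorm_C]

lemma Hpoly_nonneg (P : Fq[X][X]) : 0 ≤ Hpoly Fq P := by
  rw [Hpoly_eq_gaussNorm]
  exact P.gaussNorm_nonneg polyAbs zero_le_one

lemma one_le_Hpoly {P : Fq[X][X]} (hP : P ≠ 0) : 1 ≤ Hpoly Fq P :=
  (one_le_polyAbs (leadingCoeff_ne_zero.2 hP)).trans (polyAbs_coeff_le_Hpoly P _)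

lemma Hpoly_mul (P Q : Fq[X][X]) : Hpoly Fq (P * Q) = Hpoly Fq P * Hpoly Fq Q := by
  simp only [Hpoly_eq_gaussNorm, gaussNorm_mul isNonarchimedean_polyAbs one_pos]

lemma Hpoly_neg (P : Fq[X][X]) : Hpoly Fq (-P) = Hpoly Fq P := by
  simp only [Hpoly, coeff_neg, map_neg]
  exact iSup_congr fun i => laurentAbs.map_neg _

lemma Hpoly_sub_le_max (P Q : Fq[X][X]) : Hpoly Fq (P - Q) ≤ max (Hpoly Fq P) (Hpoly Fq Q) := by
  rw [sub_eq_add_neg, ← Hpoly_neg Q]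
  simp only [Hpoly_eq_gaussNorm]
  exact isNonarchimedean_gaussNorm polyAbs isNonarchimedean_polyAbs zero_le_one P (-Q)

lemma finite_setOf_Hpoly_le (n : ℕ) (c : ℝ) :
    {P : Fq[X][X] | P.natDegree ≤ n ∧ Hpoly Fq P ≤ c}.Finite :=
  (finite_setOf_natDegree_le_coeff_mem (finite_setOf_polyAbs_le c) n).subset
    fun P hP => ⟨hP.1, fun i => (polyAbs_coeff_le_Hpoly P i).trans hP.2⟩

lemma Hpoly_X : Hpoly Fq X = 1 := by
  rw [Hpoly_eq_gaussNorm, ← monomial_one_one_eq_X, gaussNorm_monomial, map_one, one_pow, one_mul]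

end Height

section Evaluation

variable {Fq}
omit [Fintype Fq]

lemma ne_zero_of_evalK_ne_zero {ξ : K Fq} {P : Fq[X][X]} (hP : evalK Fq P ξ ≠ 0) : P ≠ 0 := by
  rintro rfl
  exact hP (eval₂_zero _ _)

lemma evalK_sub (P Q : Fq[X][X]) (ξ : K Fq) : evalK Fq (P - Q) ξ = evalK Fq P ξ - evalK Fq Q ξ :=
  eval₂_sub _

lemma evalK_neg (P : Fq[X][X]) (ξ : K Fq) : evalK Fq (-P) ξ = -evalK Fq P ξ :=
  eval₂_neg _

lemma evalK_mul (P Q : Fq[X][X]) (ξ : K Fq) : evalK Fq (P * Q) ξ = evalK Fq P ξ * evalK Fq Q ξ :=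
  eval₂_mul _ _

lemma evalK_C_mul (p : Fq[X]) (P : Fq[X][X]) (ξ : K Fq) :
    evalK Fq (C p * P) ξ = polyToK Fq p * evalK Fq P ξ := by
  rw [evalK_mul, evalK, eval₂_C]

lemma evalK_C_mul_X_add_C (p q : Fq[X]) (ξ : K Fq) :
    evalK Fq (C p * X + C q) ξ = polyToK Fq p * ξ + polyToK Fq q := by
  simp [evalK]

end Evaluation

section Exponents

variable {Fq} {ξ : K Fq} {n : ℕ}

lemma wExp_ne_top_of_forall_le {c : ℝ} (hc : 0 < c) (D : ℕ)
    (h : ∀ P : Fq[X][X], P.natDegree ≤ n → evalK Fq P ξ ≠ 0 →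
      c ≤ Hpoly Fq P ^ D * laurentAbs (evalK Fq P ξ)) :
    wExp Fq n ξ ≠ ⊤ := by
  refine ne_top_of_le_ne_top (EReal.coe_ne_top (D + 1 : ℕ)) (sSup_le ?_)
  rintro _ ⟨w, rfl, hw⟩
  refine EReal.coe_le_coe_iff.2 (le_of_not_gt fun hlt => hw ?_)
  refine (finite_setOf_Hpoly_le n c⁻¹).subset fun P ⟨hdeg, hpos, hle⟩ => ⟨hdeg, ?_⟩
  have hne : evalK Fq P ξ ≠ 0 := laurentAbs.pos_iff.1 hpos
  have hH := one_le_Hpoly (ne_zero_of_evalK_ne_zero hne)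
  have hH₀ : 0 < Hpoly Fq P := one_pos.trans_le hH
  refine (le_inv_comm₀ hH₀ hc).2 ?_
  calc c ≤ Hpoly Fq P ^ D * laurentAbs (evalK Fq P ξ) := h P hdeg hne
    _ ≤ Hpoly Fq P ^ D * (Hpoly Fq P ^ (D + 1))⁻¹ := by
      refine mul_le_mul_of_nonneg_left (hle.trans ?_) (pow_pos hH₀ D).le
      rw [← Real.rpow_natCast, ← Real.rpow_neg hH₀.le]
      exact Real.rpow_le_rpow_of_exponent_le hH (neg_le_neg hlt.le)
    _ = (Hpoly Fq P)⁻¹ := by rw [pow_succ]; field_simp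

lemma wExp_eq_top_of_forall_exists
    (h : ∀ D : ℕ, ∀ ε > 0, ∃ P : Fq[X][X], P.natDegree ≤ n ∧ evalK Fq P ξ ≠ 0 ∧
      laurentAbs (evalK Fq P ξ) < ε ∧ Hpoly Fq P ^ D * laurentAbs (evalK Fq P ξ) ≤ 1) :
    wExp Fq n ξ = ⊤ := by
  refine EReal.eq_top_iff_forall_lt _ |>.2 fun y => ?_
  obtain ⟨D, hD⟩ := exists_nat_gt y
  refine (EReal.coe_lt_coe_iff.2 hD).trans_le (le_sSup ⟨D, rfl, fun hfin => ?_⟩)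
  have hmem {ε : ℝ} (hε : 0 < ε) : ∃ P ∈ {P : Fq[X][X] | P.natDegree ≤ n ∧
      0 < kabs Fq (evalK Fq P ξ) ∧ kabs Fq (evalK Fq P ξ) ≤ Hpoly Fq P ^ (-D : ℝ)},
      laurentAbs (evalK Fq P ξ) < ε := by
    obtain ⟨P, hdeg, hne, hlt, hle⟩ := h D ε hε
    have hH := pow_pos (one_pos.trans_le (one_le_Hpoly (ne_zero_of_evalK_ne_zero hne))) D
    refine ⟨P, ⟨hdeg, laurentAbs.pos hne, ?_⟩, hlt⟩
    rw [Real.rpow_neg (Hpoly_nonneg P), Real.rpow_natCast, ← one_div]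
    exact (le_div_iff₀' hH).2 hle
  obtain ⟨P₀, hP₀, -⟩ := hmem one_pos
  obtain ⟨P, hP, hmin⟩ :=
    Set.exists_min_image _ (fun P => laurentAbs (evalK Fq P ξ)) hfin ⟨P₀, hP₀⟩
  obtain ⟨Q, hQ, hlt⟩ := hmem hP.2.1
  exact (hmin Q hQ).not_gt hlt

/-- `ξ` is badly approximable, stated through linear forms: `H(P)|P(ξ)|` is bounded below by `c`
for all nonzero `P = uX + v`. -/
def IsBadlyApproximable (c : ℝ) (ξ : K Fq) : Prop :=
  0 < c ∧ ∀ P : Fq[X][X], P ≠ 0 → P.natDegree ≤ 1 →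
    c ≤ Hpoly Fq P * laurentAbs (evalK Fq P ξ)

lemma IsBadlyApproximable.wExp_one_ne_top {c : ℝ} (hξ : IsBadlyApproximable c ξ) :
    wExp Fq 1 ξ ≠ ⊤ := by
  refine wExp_ne_top_of_forall_le hξ.1 1 fun P hdeg hne => ?_
  rw [pow_one]
  exact hξ.2 P (ne_zero_of_evalK_ne_zero hne) hdeg

lemma natDegree_C_coeff_mul_sub_le {R : Type*} [CommRing R] {P Q : R[X]}
    (hP : P.natDegree ≤ n + 1) (hQ : Q.natDegree ≤ n + 1) :
    (C (P.coeff (n + 1)) * Q - C (Q.coeff (n + 1)) * P).natDegree ≤ n := by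
  refine natDegree_le_iff_coeff_eq_zero.2 fun m hm => ?_
  rw [coeff_sub, coeff_C_mul, coeff_C_mul]
  obtain rfl | hlt : m = n + 1 ∨ n + 1 < m := by omega
  · ring
  · rw [coeff_eq_zero_of_natDegree_lt (hP.trans_lt hlt),
      coeff_eq_zero_of_natDegree_lt (hQ.trans_lt hlt), mul_zero, mul_zero, sub_zero]

lemma IsBadlyApproximable.le_Hpoly_sq_mul {c : ℝ} (hξ : IsBadlyApproximable c ξ)
    {P Q : Fq[X][X]} (hP : P.natDegree ≤ 2) (hQ : Q.natDegree ≤ 2) (hlead : P.coeff 2 ≠ 0)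
    (hdom : Hpoly Fq Q * laurentAbs (evalK Fq P ξ) < laurentAbs (evalK Fq Q ξ)) :
    c ≤ Hpoly Fq P ^ 2 * (Hpoly Fq Q * laurentAbs (evalK Fq Q ξ)) := by
  set R := C (P.coeff 2) * Q - C (Q.coeff 2) * P with hR
  have hdomR : polyAbs (Q.coeff 2) * laurentAbs (evalK Fq P ξ) <
      polyAbs (P.coeff 2) * laurentAbs (evalK Fq Q ξ) :=
    calc polyAbs (Q.coeff 2) * laurentAbs (evalK Fq P ξ)
        ≤ Hpoly Fq Q * laurentAbs (evalK Fq P ξ) :=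
          mul_le_mul_of_nonneg_right (polyAbs_coeff_le_Hpoly Q 2) (laurentAbs.nonneg _)
      _ < laurentAbs (evalK Fq Q ξ) := hdom
      _ ≤ polyAbs (P.coeff 2) * laurentAbs (evalK Fq Q ξ) :=
          le_mul_of_one_le_left (laurentAbs.nonneg _) (one_le_polyAbs hlead)
  have hRξ : laurentAbs (evalK Fq R ξ) = polyAbs (P.coeff 2) * laurentAbs (evalK Fq Q ξ) := by
    simp only [hR, evalK_sub, evalK_C_mul, ← laurentAbs_polyToK_eq_polyAbs, ← map_mul] at hdomR ⊢
    rw [sub_eq_add_neg]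
    exact isNonarchimedean_laurentAbs.add_eq_left_of_lt (by rwa [laurentAbs.map_neg])
  have hRne : R ≠ 0 := ne_zero_of_evalK_ne_zero (ξ := ξ) <| laurentAbs.pos_iff.1 <|
    hRξ ▸ (mul_nonneg (polyAbs.nonneg _) (laurentAbs.nonneg _)).trans_lt hdomR
  have hHR : Hpoly Fq R ≤ Hpoly Fq P * Hpoly Fq Q := by
    refine (Hpoly_sub_le_max _ _).trans (max_le ?_ ?_)
    · rw [Hpoly_mul, Hpoly_C]
      exact mul_le_mul_of_nonneg_right (polyAbs_coeff_le_Hpoly P 2) (Hpoly_nonneg Q)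
    · rw [Hpoly_mul, Hpoly_C, mul_comm]
      exact mul_le_mul_of_nonneg_left (polyAbs_coeff_le_Hpoly Q 2) (Hpoly_nonneg P)
  calc c ≤ Hpoly Fq R * laurentAbs (evalK Fq R ξ) :=
        hξ.2 R hRne (natDegree_C_coeff_mul_sub_le hP hQ)
    _ ≤ (Hpoly Fq P * Hpoly Fq Q) * (Hpoly Fq P * laurentAbs (evalK Fq Q ξ)) := by
      rw [hRξ]
      gcongr
      exacts [mul_nonneg (Hpoly_nonneg P) (Hpoly_nonneg Q), polyAbs_coeff_le_Hpoly P 2]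
    _ = Hpoly Fq P ^ 2 * (Hpoly Fq Q * laurentAbs (evalK Fq Q ξ)) := by ring

/-- If `|Q(ξ)|` dominated, then eliminating `X²` between `P` and `Q` would leave a polynomial of
degree at most one violating bad approximability. -/
lemma IsBadlyApproximable.laurentAbs_evalK_le {c : ℝ} (hξ : IsBadlyApproximable c ξ)
    {P Q : Fq[X][X]} (hP : P.natDegree ≤ 2) (hQ : Q.natDegree ≤ 2)
    (hPξ : evalK Fq P ξ ≠ 0) (hQξ : evalK Fq Q ξ ≠ 0)
    (hlt : Hpoly Fq P ^ 2 * (Hpoly Fq Q * laurentAbs (evalK Fq Q ξ)) < c) :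
    laurentAbs (evalK Fq Q ξ) ≤ Hpoly Fq Q * laurentAbs (evalK Fq P ξ) := by
  by_contra! hdom
  refine hlt.not_ge ?_
  by_cases hlead : P.coeff 2 = 0
  · have hdeg : P.natDegree ≤ 1 := by
      have := natDegree_C_coeff_mul_sub_le (n := 1) hP (natDegree_X_pow_le 2)
      simpa [hlead] using this
    have hHP := one_le_Hpoly (ne_zero_of_evalK_ne_zero hPξ)
    have hHQ := one_le_Hpoly (ne_zero_of_evalK_ne_zero hQξ)
    have hPQ : laurentAbs (evalK Fq P ξ) ≤ Hpoly Fq Q * laurentAbs (evalK Fq Q ξ) :=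
      (le_mul_of_one_le_left (laurentAbs.nonneg _) hHQ).trans
        (hdom.le.trans (le_mul_of_one_le_left (laurentAbs.nonneg _) hHQ))
    calc c ≤ Hpoly Fq P * laurentAbs (evalK Fq P ξ) :=
          hξ.2 P (ne_zero_of_evalK_ne_zero hPξ) hdeg
      _ ≤ Hpoly Fq P ^ 2 * (Hpoly Fq Q * laurentAbs (evalK Fq Q ξ)) :=
        mul_le_mul (le_self_pow₀ hHP two_ne_zero) hPQ (laurentAbs.nonneg _) (by positivity)
  · exact hξ.le_Hpoly_sq_mul hP hQ hlead hdom

lemma IsBadlyApproximable.one_le_mul_laurentAbs_evalK {c : ℝ} (hξ : IsBadlyApproximable c ξ)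
    {P Q : Fq[X][X]} (hP : P.natDegree ≤ 2) (hQ : Q.natDegree ≤ 2)
    (hPξ : evalK Fq P ξ ≠ 0) (hQξ : evalK Fq Q ξ ≠ 0)
    (hlt : Hpoly Fq P ^ 2 * (Hpoly Fq Q * laurentAbs (evalK Fq Q ξ)) < c)
    {A : ℝ} (hA : Hpoly Fq Q ≤ A * laurentAbs (evalK Fq Q ξ)) :
    1 ≤ A * laurentAbs (evalK Fq P ξ) := by
  refine le_of_mul_le_mul_right ?_ (laurentAbs.pos hQξ)
  calc 1 * laurentAbs (evalK Fq Q ξ) ≤ Hpoly Fq Q * laurentAbs (evalK Fq P ξ) :=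
        (one_mul _).trans_le (hξ.laurentAbs_evalK_le hP hQ hPξ hQξ hlt)
    _ ≤ A * laurentAbs (evalK Fq Q ξ) * laurentAbs (evalK Fq P ξ) :=
        mul_le_mul_of_nonneg_right hA (laurentAbs.nonneg _)
    _ = A * laurentAbs (evalK Fq P ξ) * laurentAbs (evalK Fq Q ξ) := mul_right_comm _ _ _

lemma IsBadlyApproximable.wExp_two_ne_top {c : ℝ} (hξ : IsBadlyApproximable c ξ) {B M : ℝ} {n₀ : ℕ}
    (hM : 0 < M)
    (h : ∀ n ≥ n₀, ∃ Q : Fq[X][X], Q.natDegree ≤ 2 ∧ evalK Fq Q ξ ≠ 0 ∧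
      4 ^ n * (Hpoly Fq Q * laurentAbs (evalK Fq Q ξ)) ≤ B ∧
      Hpoly Fq Q ≤ M ^ n * laurentAbs (evalK Fq Q ξ)) :
    wExp Fq 2 ξ ≠ ⊤ := by
  obtain ⟨s, hs⟩ : ∃ s : ℕ, B < c * 4 ^ s := by
    obtain ⟨s, hs⟩ := pow_unbounded_of_one_lt (B / c) (by norm_num : (1 : ℝ) < 4)
    exact ⟨s, (div_lt_iff₀' hξ.1).1 hs⟩
  obtain ⟨D, hD⟩ := pow_unbounded_of_one_lt M one_lt_two
  refine wExp_ne_top_of_forall_le (inv_pos.2 (pow_pos hM (n₀ + s + 1))) D fun P hP hPξ => ?_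
  obtain ⟨k, hk, hk'⟩ :=
    exists_nat_pow_near (one_le_Hpoly (ne_zero_of_evalK_ne_zero hPξ)) one_lt_two
  obtain ⟨Q, hQ, hQξ, hsmall, hheight⟩ := h (n₀ + s + 1 + k) (by omega)
  have hPpos := laurentAbs.pos hPξ
  have hlt : Hpoly Fq P ^ 2 * (Hpoly Fq Q * laurentAbs (evalK Fq Q ξ)) < c := by
    have hQnonneg := mul_nonneg (Hpoly_nonneg Q) (laurentAbs.nonneg (evalK Fq Q ξ))
    refine lt_of_mul_lt_mul_right (lt_of_le_of_lt ?_ hs) (by positivity)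
    calc Hpoly Fq P ^ 2 * (Hpoly Fq Q * laurentAbs (evalK Fq Q ξ)) * 4 ^ s
        ≤ (2 ^ (k + 1)) ^ 2 * (Hpoly Fq Q * laurentAbs (evalK Fq Q ξ)) * 4 ^ s := by
          gcongr
          exact Hpoly_nonneg P
      _ = 4 ^ (s + 1 + k) * (Hpoly Fq Q * laurentAbs (evalK Fq Q ξ)) := by
          rw [pow_right_comm]; ring
      _ ≤ 4 ^ (n₀ + s + 1 + k) * (Hpoly Fq Q * laurentAbs (evalK Fq Q ξ)) := by
          gcongr <;> [norm_num; omega]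
      _ ≤ B := hsmall
  have hMk : M ^ k ≤ Hpoly Fq P ^ D :=
    calc M ^ k ≤ (2 ^ D) ^ k := pow_le_pow_left₀ hM.le hD.le k
      _ = (2 ^ k) ^ D := pow_right_comm _ _ _
      _ ≤ Hpoly Fq P ^ D := by gcongr
  rw [inv_le_iff_one_le_mul₀' (by positivity), ← mul_assoc]
  refine (hξ.one_le_mul_laurentAbs_evalK hP hQ hPξ hQξ hlt hheight).trans ?_
  rw [pow_add]
  gcongr

end Exponents

section Denominators

variable {Fq} {a : ℕ → Fq[X]} {β : ℝ}

/-- The absolute value `|q_n|` of the denominator of the `n`-th convergent of `[a 0; a 1, …]`. -/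
def denAbs (a : ℕ → Fq[X]) (n : ℕ) : ℝ :=
  polyAbs (qSeq Fq a (n + 1))

lemma denAbs_zero (a : ℕ → Fq[X]) : denAbs a 0 = 1 :=
  map_one polyAbs

lemma polyAbs_qSeq_lt (ha : ∀ n, 1 ≤ n → 1 ≤ (a n).natDegree) (n : ℕ) :
    polyAbs (qSeq Fq a n) < denAbs a n := by
  induction n with
  | zero => rw [denAbs_zero, qSeq, map_zero]; exact one_pos
  | succ n ih =>
    have hpos : 0 < denAbs a n := (polyAbs.nonneg _).trans_lt ih
    have hmul : denAbs a n < polyAbs (a (n + 1) * qSeq Fq a (n + 1)) := by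
      rw [map_mul]
      exact lt_mul_of_one_lt_left hpos (one_lt_two.trans_le (two_le_polyAbs (ha _ (by omega))))
    have hadd := isNonarchimedean_polyAbs.add_eq_left_of_lt (ih.trans hmul)
    exact hmul.trans_eq hadd.symm

lemma denAbs_pos (ha : ∀ n, 1 ≤ n → 1 ≤ (a n).natDegree) (n : ℕ) : 0 < denAbs a n :=
  (polyAbs.nonneg _).trans_lt (polyAbs_qSeq_lt ha n)

lemma strictMono_denAbs (ha : ∀ n, 1 ≤ n → 1 ≤ (a n).natDegree) : StrictMono (denAbs a) :=
  strictMono_nat_of_lt_succ fun n => polyAbs_qSeq_lt ha (n + 1)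

lemma one_le_denAbs (ha : ∀ n, 1 ≤ n → 1 ≤ (a n).natDegree) (n : ℕ) : 1 ≤ denAbs a n :=
  (denAbs_zero a).ge.trans ((strictMono_denAbs ha).monotone n.zero_le)

lemma denAbs_succ (ha : ∀ n, 1 ≤ n → 1 ≤ (a n).natDegree) (n : ℕ) :
    denAbs a (n + 1) = polyAbs (a (n + 1)) * denAbs a n := by
  have hle : denAbs a n ≤ polyAbs (a (n + 1) * qSeq Fq a (n + 1)) := by
    rw [map_mul]
    exact le_mul_of_one_le_left (polyAbs.nonneg _)
      (one_le_two.trans (two_le_polyAbs (ha _ (by omega))))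
  rw [denAbs, denAbs, ← map_mul]
  exact isNonarchimedean_polyAbs.add_eq_left_of_lt ((polyAbs_qSeq_lt ha n).trans_le hle)

lemma two_pow_mul_denAbs_le (ha : ∀ n, 1 ≤ n → 1 ≤ (a n).natDegree) (n m : ℕ) :
    2 ^ m * denAbs a n ≤ denAbs a (n + m) := by
  induction m with
  | zero => simp
  | succ m ih =>
    rw [← add_assoc, denAbs_succ ha, pow_succ', mul_assoc]
    exact mul_le_mul (two_le_polyAbs (ha _ (by omega))) ih
      (mul_nonneg (by positivity) (denAbs_pos ha n).le) (polyAbs.nonneg _)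

lemma two_pow_le_denAbs (ha : ∀ n, 1 ≤ n → 1 ≤ (a n).natDegree) (n : ℕ) : 2 ^ n ≤ denAbs a n := by
  simpa [denAbs_zero] using two_pow_mul_denAbs_le ha 0 n

lemma two_pow_mul_denAbs_succ_le (ha : ∀ n, 1 ≤ n → 1 ≤ (a n).natDegree)
    (hβ : ∀ n, polyAbs (a (n + 1)) ≤ β) (n m : ℕ) :
    2 ^ m * denAbs a (n + 1) ≤ β * denAbs a (n + m) :=
  calc 2 ^ m * denAbs a (n + 1) ≤ denAbs a (n + 1 + m) := two_pow_mul_denAbs_le ha _ _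
    _ = polyAbs (a (n + m + 1)) * denAbs a (n + m) := by rw [add_right_comm, denAbs_succ ha]
    _ ≤ β * denAbs a (n + m) := mul_le_mul_of_nonneg_right (hβ _) (denAbs_pos ha _).le

lemma denAbs_le_pow (ha : ∀ n, 1 ≤ n → 1 ≤ (a n).natDegree)
    (hβ : ∀ n, polyAbs (a (n + 1)) ≤ β) (n : ℕ) : denAbs a n ≤ β ^ n := by
  induction n with
  | zero => rw [denAbs_zero, pow_zero]
  | succ n ih =>
    rw [denAbs_succ ha, pow_succ']
    exact mul_le_mul (hβ n) ih (denAbs_pos ha n).le ((polyAbs.nonneg _).trans (hβ n))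

lemma denAbs_mul_denAbs_succ_le_pow (ha : ∀ n, 1 ≤ n → 1 ≤ (a n).natDegree)
    (hβ : ∀ n, polyAbs (a (n + 1)) ≤ β) {k l : ℕ} (hkl : k ≤ l) :
    denAbs a k * denAbs a (l + 1) ≤ β ^ (2 * l + 1) := by
  have hβ₀ : 0 ≤ β := (polyAbs.nonneg _).trans (hβ 0)
  calc denAbs a k * denAbs a (l + 1) ≤ denAbs a l * denAbs a (l + 1) :=
        mul_le_mul_of_nonneg_right ((strictMono_denAbs ha).monotone hkl) (denAbs_pos ha _).le
    _ ≤ β ^ l * β ^ (l + 1) :=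
        mul_le_mul (denAbs_le_pow ha hβ l) (denAbs_le_pow ha hβ _) (denAbs_pos ha _).le
          (pow_nonneg hβ₀ l)
    _ = β ^ (2 * l + 1) := by ring

lemma exists_denAbs_le_and_lt (ha : ∀ n, 1 ≤ n → 1 ≤ (a n).natDegree) {x : ℝ} (hx : 1 ≤ x) :
    ∃ n, denAbs a n ≤ x ∧ x < denAbs a (n + 1) := by
  classical
  have hex : ∃ n, x < denAbs a n := by
    obtain ⟨n, hn⟩ := pow_unbounded_of_one_lt x one_lt_two
    exact ⟨n, hn.trans_le (two_pow_le_denAbs ha n)⟩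
  obtain ⟨n, hn⟩ : ∃ n, Nat.find hex = n + 1 :=
    Nat.exists_eq_succ_of_ne_zero fun h =>
      hx.not_gt ((denAbs_zero a).symm ▸ (Nat.find_eq_zero hex).1 h)
  exact ⟨n, not_lt.1 (Nat.find_min hex (hn ▸ n.lt_succ_self)), hn ▸ Nat.find_spec hex⟩

end Denominators

section ConvergentForms

variable {Fq}
omit [Fintype Fq]

/-- The linear form `q_{n-1} X - p_{n-1}` attached to a convergent of `[a 0; a 1, …]`, with the
index shift of `pSeq` and `qSeq`. -/
def convForm (a : ℕ → Fq[X]) (n : ℕ) : Fq[X][X] :=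
  C (qSeq Fq a n) * X - C (pSeq Fq a n)

lemma convForm_add_two (a : ℕ → Fq[X]) (n : ℕ) :
    convForm a (n + 2) = C (a (n + 1)) * convForm a (n + 1) + convForm a n := by
  simp only [convForm, pSeq, qSeq, map_add, map_mul]
  ring

lemma natDegree_convForm_le (a : ℕ → Fq[X]) (n : ℕ) : (convForm a n).natDegree ≤ 1 := by
  rw [convForm, natDegree_sub_C]
  exact (natDegree_C_mul_le _ _).trans natDegree_X_le

lemma evalK_convForm (a : ℕ → Fq[X]) (n : ℕ) (ξ : K Fq) :
    evalK Fq (convForm a n) ξ = polyToK Fq (qSeq Fq a n) * ξ - polyToK Fq (pSeq Fq a n) := by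
  simp [evalK, convForm]

/-- The quadratic polynomial attached to a coincidence of the partial quotients from `a (i + 1)` on
with those from `a (j + 1)` on. If the partial quotients agreed forever, then `ξ` would be a root,
because its complete quotients after `i` and after `j` steps would be equal. -/
def coincidenceForm (a : ℕ → Fq[X]) (i j : ℕ) : Fq[X][X] :=
  convForm a i * convForm a (j + 1) - convForm a (i + 1) * convForm a j

lemma coincidenceForm_add_succ (a : ℕ → Fq[X]) (i j : ℕ) :
    coincidenceForm a i j + coincidenceForm a (i + 1) (j + 1) =
      C (a (j + 1) - a (i + 1)) * (convForm a (i + 1) * convForm a (j + 1)) := by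
  simp only [coincidenceForm, convForm_add_two, C_sub]
  ring

lemma natDegree_coincidenceForm_le (a : ℕ → Fq[X]) (i j : ℕ) :
    (coincidenceForm a i j).natDegree ≤ 2 :=
  (natDegree_sub_le _ _).trans <| max_le
    (natDegree_mul_le_of_le (natDegree_convForm_le a i) (natDegree_convForm_le a (j + 1)))
    (natDegree_mul_le_of_le (natDegree_convForm_le a (i + 1)) (natDegree_convForm_le a j))

end ConvergentForms

section ContinuedFraction

variable {Fq} {a : ℕ → Fq[X]} {ξ : K Fq} {β : ℝ}

lemma IsCFOf.one_lt_of_forall_polyAbs_le (hξ : IsCFOf Fq ξ a)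
    (hβ : ∀ n, polyAbs (a (n + 1)) ≤ β) : 1 < β :=
  one_lt_two.trans_le ((two_le_polyAbs (hξ.1 1 le_rfl)).trans (hβ 0))

lemma laurentAbs_evalK_convForm (hξ : IsCFOf Fq ξ a) (n : ℕ) :
    laurentAbs (evalK Fq (convForm a n) ξ) = (denAbs a n)⁻¹ := by
  rw [evalK_convForm]
  cases n with
  | zero => simp [qSeq, pSeq, denAbs_zero]
  | succ n =>
    have hq : 0 < laurentAbs (polyToK Fq (qSeq Fq a (n + 1))) := denAbs_pos hξ.1 n
    have hconv : laurentAbs (ξ - polyToK Fq (pSeq Fq a (n + 1)) / polyToK Fq (qSeq Fq a (n + 1))) =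
        (denAbs a n * denAbs a (n + 1))⁻¹ := hξ.2 n
    have hform : polyToK Fq (qSeq Fq a (n + 1)) * ξ - polyToK Fq (pSeq Fq a (n + 1)) =
        polyToK Fq (qSeq Fq a (n + 1)) *
          (ξ - polyToK Fq (pSeq Fq a (n + 1)) / polyToK Fq (qSeq Fq a (n + 1))) := by
      rw [mul_sub, mul_div_cancel₀ _ (laurentAbs.pos_iff.1 hq)]
    rw [hform, map_mul, hconv, mul_inv]
    exact mul_inv_cancel_left₀ (denAbs_pos hξ.1 n).ne' _

lemma Hpoly_convForm_le (hξ : IsCFOf Fq ξ a) (n : ℕ) :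
    Hpoly Fq (convForm a n) ≤ max 1 (laurentAbs ξ) * denAbs a n := by
  have hden := one_le_denAbs hξ.1 n
  have hq := (polyAbs_qSeq_lt hξ.1 n).le
  have hp : polyAbs (pSeq Fq a n) ≤ max 1 (laurentAbs ξ) * denAbs a n := by
    have hpn : polyToK Fq (pSeq Fq a n) =
        polyToK Fq (qSeq Fq a n) * ξ + -evalK Fq (convForm a n) ξ := by
      rw [evalK_convForm]; ring
    rw [← laurentAbs_polyToK_eq_polyAbs, hpn]
    refine (isNonarchimedean_laurentAbs _ _).trans (max_le ?_ ?_)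
    · rw [map_mul, mul_comm]
      exact mul_le_mul (le_max_right _ _) hq (laurentAbs.nonneg _) (by positivity)
    · rw [laurentAbs.map_neg, laurentAbs_evalK_convForm hξ]
      exact (inv_le_one_of_one_le₀ hden).trans
        (one_le_mul_of_one_le_of_one_le (le_max_left _ _) hden)
  refine (Hpoly_sub_le_max _ _).trans (max_le ?_ ?_)
  · rw [Hpoly_mul, Hpoly_C, Hpoly_X, mul_one]
    exact hq.trans (le_mul_of_one_le_left (denAbs_pos hξ.1 n).le (le_max_left _ _))
  · rwa [Hpoly_C]

/-- Eliminating `X` between `uX + v` and `q_n X - p_n`, where `|q_n| ≤ |u| < |q_{n+1}|`, leaves a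
polynomial `N` in `T` alone, so that either `N = 0` or `1 ≤ |N|`. -/
lemma inv_le_denAbs_mul_laurentAbs_evalK (hξ : IsCFOf Fq ξ a) (hβ : ∀ n, polyAbs (a (n + 1)) ≤ β)
    {u v : Fq[X]} {n : ℕ} (hle : denAbs a n ≤ polyAbs u) (hlt : polyAbs u < denAbs a (n + 1)) :
    β⁻¹ ≤ denAbs a n * laurentAbs (evalK Fq (C u * X + C v) ξ) := by
  have hβ₁ := hξ.one_lt_of_forall_polyAbs_le hβ
  set N := u * pSeq Fq a (n + 1) + v * qSeq Fq a (n + 1) with hN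
  have heval : polyToK Fq (qSeq Fq a (n + 1)) * evalK Fq (C u * X + C v) ξ =
      polyToK Fq u * evalK Fq (convForm a (n + 1)) ξ + polyToK Fq N := by
    simp only [evalK_convForm, evalK_C_mul_X_add_C, hN, map_add, map_mul]
    ring
  have hu : laurentAbs (polyToK Fq u * evalK Fq (convForm a (n + 1)) ξ) =
      polyAbs u * (denAbs a (n + 1))⁻¹ := by
    rw [map_mul, laurentAbs_evalK_convForm hξ, laurentAbs_polyToK_eq_polyAbs]
  have hden := denAbs_pos hξ.1 (n + 1)
  rw [denAbs, ← laurentAbs_polyToK_eq_polyAbs, ← map_mul, heval]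
  by_cases hN₀ : N = 0
  · rw [hN₀, map_zero, add_zero, hu, ← div_eq_mul_inv, le_div_iff₀ hden, denAbs_succ hξ.1,
      inv_mul_le_iff₀ (by positivity)]
    exact mul_le_mul (hβ n) hle (denAbs_pos hξ.1 n).le (by positivity)
  · have hN₁ : 1 ≤ laurentAbs (polyToK Fq N) := one_le_polyAbs hN₀
    have hu₁ : polyAbs u * (denAbs a (n + 1))⁻¹ < 1 := by rwa [← div_eq_mul_inv, div_lt_one hden]
    rw [isNonarchimedean_laurentAbs.add_eq_right_of_lt (hu ▸ hu₁.trans_le hN₁)]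
    exact (inv_le_one_of_one_le₀ hβ₁.le).trans hN₁

lemma IsCFOf.isBadlyApproximable (hξ : IsCFOf Fq ξ a) (hβ : ∀ n, polyAbs (a (n + 1)) ≤ β) :
    IsBadlyApproximable β⁻¹ ξ := by
  have hβ₁ := hξ.one_lt_of_forall_polyAbs_le hβ
  refine ⟨by positivity, fun P hP hdeg => ?_⟩
  obtain ⟨u, v, rfl⟩ := exists_eq_X_add_C_of_natDegree_le_one hdeg
  by_cases hu : u = 0
  · subst hu
    have hv : v ≠ 0 := by rintro rfl; simp at hP
    have hPv : laurentAbs (evalK Fq (C 0 * X + C v) ξ) = polyAbs v := by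
      rw [evalK_C_mul_X_add_C, map_zero, zero_mul, zero_add, laurentAbs_polyToK_eq_polyAbs]
    rw [hPv]
    exact (inv_le_one_of_one_le₀ hβ₁.le).trans
      (one_le_mul_of_one_le_of_one_le (one_le_Hpoly hP) (one_le_polyAbs hv))
  · obtain ⟨n, hle, hlt⟩ := exists_denAbs_le_and_lt hξ.1 (one_le_polyAbs hu)
    have hH : polyAbs u ≤ Hpoly Fq (C u * X + C v) := by
      have hcoeff : (C u * X + C v).coeff 1 = u := by simp [coeff_C]
      exact (congrArg polyAbs hcoeff).ge.trans (polyAbs_coeff_le_Hpoly _ 1)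
    exact (inv_le_denAbs_mul_laurentAbs_evalK hξ hβ hle hlt).trans
      (mul_le_mul_of_nonneg_right (hle.trans hH) (laurentAbs.nonneg _))

lemma Hpoly_coincidenceForm_le (hξ : IsCFOf Fq ξ a) (i j : ℕ) :
    Hpoly Fq (coincidenceForm a i j) ≤
      max 1 (laurentAbs ξ) ^ 2 * (denAbs a (i + 1) * denAbs a (j + 1)) := by
  have hmono := (strictMono_denAbs hξ.1).monotone
  have hmul {k l : ℕ} (hk : k ≤ i + 1) (hl : l ≤ j + 1) :
      Hpoly Fq (convForm a k * convForm a l) ≤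
        max 1 (laurentAbs ξ) ^ 2 * (denAbs a (i + 1) * denAbs a (j + 1)) := by
    have hform {k k' : ℕ} (hk : k ≤ k') :
        Hpoly Fq (convForm a k) ≤ max 1 (laurentAbs ξ) * denAbs a k' :=
      (Hpoly_convForm_le hξ k).trans (by gcongr; exact hmono hk)
    rw [Hpoly_mul, sq, mul_mul_mul_comm]
    exact mul_le_mul (hform hk) (hform hl) (Hpoly_nonneg _)
      ((Hpoly_nonneg _).trans (hform hk))
  exact (Hpoly_sub_le_max _ _).trans (max_le (hmul (by omega) le_rfl) (hmul le_rfl (by omega)))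

lemma laurentAbs_evalK_coincidenceForm_lt (hξ : IsCFOf Fq ξ a) (i j : ℕ) :
    laurentAbs (evalK Fq (coincidenceForm a i j) ξ) < (denAbs a i * denAbs a j)⁻¹ := by
  have hpos := denAbs_pos hξ.1
  rw [coincidenceForm, evalK_sub, evalK_mul, evalK_mul, sub_eq_add_neg]
  refine (isNonarchimedean_laurentAbs _ _).trans_lt (max_lt ?_ ?_)
  · rw [map_mul, laurentAbs_evalK_convForm hξ, laurentAbs_evalK_convForm hξ, ← mul_inv]
    gcongr
    exacts [mul_pos (hpos i) (hpos j), hpos i, strictMono_denAbs hξ.1 j.lt_succ_self]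
  · rw [laurentAbs.map_neg, map_mul, laurentAbs_evalK_convForm hξ, laurentAbs_evalK_convForm hξ,
      ← mul_inv]
    gcongr
    exacts [mul_pos (hpos i) (hpos j), hpos j, strictMono_denAbs hξ.1 i.lt_succ_self]

lemma inv_le_laurentAbs_evalK_coincidenceForm (hξ : IsCFOf Fq ξ a) {i j : ℕ}
    (hij : a (i + 1) ≠ a (j + 1)) :
    (denAbs a (i + 1) * denAbs a (j + 1))⁻¹ ≤
      laurentAbs (evalK Fq (coincidenceForm a i j) ξ) := by
  have hsum : evalK Fq (coincidenceForm a i j) ξ =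
      polyToK Fq (a (j + 1) - a (i + 1)) *
        (evalK Fq (convForm a (i + 1)) ξ * evalK Fq (convForm a (j + 1)) ξ) +
      -evalK Fq (coincidenceForm a (i + 1) (j + 1)) ξ := by
    rw [← sub_eq_add_neg, ← evalK_mul, ← evalK_C_mul, ← coincidenceForm_add_succ, ← evalK_sub,
      add_sub_cancel_right]
  have hmain : (denAbs a (i + 1) * denAbs a (j + 1))⁻¹ ≤
      laurentAbs (polyToK Fq (a (j + 1) - a (i + 1)) *
        (evalK Fq (convForm a (i + 1)) ξ * evalK Fq (convForm a (j + 1)) ξ)) := by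
    have hpos := denAbs_pos hξ.1
    rw [map_mul, map_mul, laurentAbs_evalK_convForm hξ, laurentAbs_evalK_convForm hξ, ← mul_inv]
    exact le_mul_of_one_le_left (inv_pos.2 (mul_pos (hpos (i + 1)) (hpos (j + 1)))).le
      (one_le_polyAbs (sub_ne_zero.2 hij.symm))
  rw [hsum, isNonarchimedean_laurentAbs.add_eq_left_of_lt]
  · exact hmain
  · rw [laurentAbs.map_neg]
    exact (laurentAbs_evalK_coincidenceForm_lt hξ _ _).trans_le hmain

lemma BlocksAgree.laurentAbs_evalK_coincidenceForm_eq {i j m : ℕ}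
    (h : BlocksAgree (fun n => a (n + 1)) i j m) (ξ : K Fq) :
    laurentAbs (evalK Fq (coincidenceForm a (i + m) (j + m)) ξ) =
      laurentAbs (evalK Fq (coincidenceForm a i j) ξ) := by
  induction m with
  | zero => rfl
  | succ m ih =>
    rw [← ih fun k hk => h k (by omega), ← laurentAbs.map_neg]
    have hsum := coincidenceForm_add_succ a (i + m) (j + m)
    rw [show a (i + m + 1) = a (j + m + 1) from h m (by omega), sub_self, C_0, zero_mul] at hsum
    rw [eq_neg_of_add_eq_zero_left hsum, evalK_neg, add_assoc, add_assoc]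

end ContinuedFraction

section QuadraticExponent

variable {Fq} {a : ℕ → Fq[X]} {ξ : K Fq} {β : ℝ} {i j m : ℕ}

lemma evalK_coincidenceForm_ne_zero (hξ : IsCFOf Fq ξ a)
    (hagree : BlocksAgree (fun n => a (n + 1)) i j m) (hne : a (i + m + 1) ≠ a (j + m + 1)) :
    evalK Fq (coincidenceForm a i j) ξ ≠ 0 := by
  have hpos := mul_pos (denAbs_pos hξ.1 (i + m + 1)) (denAbs_pos hξ.1 (j + m + 1))
  refine laurentAbs.pos_iff.1 ((inv_pos.2 hpos).trans_le ?_)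
  rw [← hagree.laurentAbs_evalK_coincidenceForm_eq]
  exact inv_le_laurentAbs_evalK_coincidenceForm hξ hne

lemma laurentAbs_evalK_coincidenceForm_le_pow (hξ : IsCFOf Fq ξ a)
    (hagree : BlocksAgree (fun n => a (n + 1)) i j m) :
    laurentAbs (evalK Fq (coincidenceForm a i j) ξ) ≤ 2⁻¹ ^ m := by
  rw [← hagree.laurentAbs_evalK_coincidenceForm_eq, inv_pow]
  refine (laurentAbs_evalK_coincidenceForm_lt hξ _ _).le.trans (inv_anti₀ (by positivity) ?_)
  have hden : 2 ^ m ≤ denAbs a (j + m) :=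
    (pow_le_pow_right₀ one_le_two (by omega)).trans (two_pow_le_denAbs hξ.1 (j + m))
  exact hden.trans (le_mul_of_one_le_left (denAbs_pos hξ.1 _).le (one_le_denAbs hξ.1 _))

lemma Hpoly_coincidenceForm_le_pow (hξ : IsCFOf Fq ξ a) (hβ : ∀ n, polyAbs (a (n + 1)) ≤ β)
    (hij : i < j) :
    Hpoly Fq (coincidenceForm a i j) ≤ max 1 (laurentAbs ξ) ^ 2 * β ^ (2 * j + 1) :=
  (Hpoly_coincidenceForm_le hξ i j).trans
    (mul_le_mul_of_nonneg_left (denAbs_mul_denAbs_succ_le_pow hξ.1 hβ hij) (by positivity))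

lemma four_pow_mul_Hpoly_mul_laurentAbs_coincidenceForm_le (hξ : IsCFOf Fq ξ a)
    (hβ : ∀ n, polyAbs (a (n + 1)) ≤ β) (hagree : BlocksAgree (fun n => a (n + 1)) i j m) :
    4 ^ m * (Hpoly Fq (coincidenceForm a i j) * laurentAbs (evalK Fq (coincidenceForm a i j) ξ)) ≤
      (max 1 (laurentAbs ξ) * β) ^ 2 := by
  have hpos := denAbs_pos hξ.1
  have hβ₀ : 0 ≤ β := (polyAbs.nonneg _).trans (hβ 0)
  have hprod : (2 ^ m * denAbs a (i + 1)) * (2 ^ m * denAbs a (j + 1)) ≤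
      (β * denAbs a (i + m)) * (β * denAbs a (j + m)) :=
    mul_le_mul (two_pow_mul_denAbs_succ_le hξ.1 hβ i m) (two_pow_mul_denAbs_succ_le hξ.1 hβ j m)
      (mul_nonneg (by positivity) (hpos _).le) (mul_nonneg hβ₀ (hpos _).le)
  have hij := mul_pos (hpos (i + m)) (hpos (j + m))
  have hsmall := (laurentAbs_evalK_coincidenceForm_lt hξ (i + m) (j + m)).le
  rw [hagree.laurentAbs_evalK_coincidenceForm_eq, ← one_div, le_div_iff₀ hij] at hsmall
  set x := laurentAbs (evalK Fq (coincidenceForm a i j) ξ)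
  have hx : 0 ≤ x := laurentAbs.nonneg _
  calc 4 ^ m * (Hpoly Fq (coincidenceForm a i j) * x)
      ≤ 4 ^ m * (max 1 (laurentAbs ξ) ^ 2 * (denAbs a (i + 1) * denAbs a (j + 1)) * x) := by
        gcongr
        exact Hpoly_coincidenceForm_le hξ i j
    _ = max 1 (laurentAbs ξ) ^ 2 *
          ((2 ^ m * denAbs a (i + 1)) * (2 ^ m * denAbs a (j + 1)) * x) := by
        rw [show (4 : ℝ) = 2 * 2 by norm_num, mul_pow]; ring
    _ ≤ max 1 (laurentAbs ξ) ^ 2 * ((β * denAbs a (i + m)) * (β * denAbs a (j + m)) * x) :=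
        mul_le_mul_of_nonneg_left (mul_le_mul_of_nonneg_right hprod hx) (by positivity)
    _ = (max 1 (laurentAbs ξ) * β) ^ 2 * (x * (denAbs a (i + m) * denAbs a (j + m))) := by ring
    _ ≤ (max 1 (laurentAbs ξ) * β) ^ 2 := mul_le_of_le_one_right (by positivity) hsmall

lemma Hpoly_coincidenceForm_le_mul_laurentAbs (hξ : IsCFOf Fq ξ a)
    (hβ : ∀ n, polyAbs (a (n + 1)) ≤ β) (hij : i < j)
    (hagree : BlocksAgree (fun n => a (n + 1)) i j m) (hne : a (i + m + 1) ≠ a (j + m + 1)) :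
    Hpoly Fq (coincidenceForm a i j) ≤ max 1 (laurentAbs ξ) ^ 2 * β ^ (4 * j + 2 * m + 2) *
      laurentAbs (evalK Fq (coincidenceForm a i j) ξ) := by
  have hβ₁ := (hξ.one_lt_of_forall_polyAbs_le hβ).le
  have hlower : 1 ≤ β ^ (2 * j + 2 * m + 1) *
      laurentAbs (evalK Fq (coincidenceForm a i j) ξ) := by
    have hx := inv_le_laurentAbs_evalK_coincidenceForm hξ hne
    rw [hagree.laurentAbs_evalK_coincidenceForm_eq, inv_le_iff_one_le_mul₀'
      (mul_pos (denAbs_pos hξ.1 _) (denAbs_pos hξ.1 _))] at hx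
    refine hx.trans (mul_le_mul_of_nonneg_right ?_ (laurentAbs.nonneg _))
    exact (denAbs_mul_denAbs_succ_le_pow hξ.1 hβ (by omega)).trans
      (pow_le_pow_right₀ hβ₁ (by omega : 2 * (j + m) + 1 ≤ 2 * j + 2 * m + 1))
  calc Hpoly Fq (coincidenceForm a i j)
      ≤ max 1 (laurentAbs ξ) ^ 2 * β ^ (2 * j + 1) := Hpoly_coincidenceForm_le_pow hξ hβ hij
    _ ≤ max 1 (laurentAbs ξ) ^ 2 * β ^ (2 * j + 1) * (β ^ (2 * j + 2 * m + 1) *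
          laurentAbs (evalK Fq (coincidenceForm a i j) ξ)) :=
        le_mul_of_one_le_right (by positivity) hlower
    _ = max 1 (laurentAbs ξ) ^ 2 * β ^ (4 * j + 2 * m + 2) *
          laurentAbs (evalK Fq (coincidenceForm a i j) ξ) := by ring

lemma IsCFOf.wExp_two_ne_top_of_dioExp_ne_top (hξ : IsCFOf Fq ξ a)
    (hβ : ∀ n, polyAbs (a (n + 1)) ≤ β)
    (hper : ¬UltimatelyPeriodic fun n => a (n + 1))
    (hcomp : limsup (fun n : ℕ => (complexity (fun k => a (k + 1)) n : ℝ≥0∞) / (n : ℝ≥0∞)) atTop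
      < ⊤)
    (hdio : dioExp (fun n => a (n + 1)) ≠ ⊤) :
    wExp Fq 2 ξ ≠ ⊤ := by
  have hβ₁ := (hξ.one_lt_of_forall_polyAbs_le hβ).le
  obtain ⟨κ, ρ, n₀, hrep⟩ := exists_maximal_repetition hper hcomp hdio
  refine (hξ.isBadlyApproximable hβ).wExp_two_ne_top (n₀ := n₀ + 1)
    (B := (max 1 (laurentAbs ξ) * β) ^ 2)
    (M := max 1 (laurentAbs ξ) ^ 2 * β ^ (4 * κ + 2 * (ρ * κ) + 2)) (by positivity) fun n hn => ?_
  obtain ⟨i, j, m, hij, hj, hm, hm', hagree, hne⟩ := hrep n (by omega)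
  refine ⟨coincidenceForm a i j, natDegree_coincidenceForm_le a i j,
    evalK_coincidenceForm_ne_zero hξ hagree hne, ?_, ?_⟩
  · refine le_trans (mul_le_mul_of_nonneg_right ?_
      (mul_nonneg (Hpoly_nonneg _) (laurentAbs.nonneg _)))
      (four_pow_mul_Hpoly_mul_laurentAbs_coincidenceForm_le hξ hβ hagree)
    exact pow_le_pow_right₀ (by norm_num) hm
  · refine (Hpoly_coincidenceForm_le_mul_laurentAbs hξ hβ hij hagree hne).trans
      (mul_le_mul_of_nonneg_right ?_ (laurentAbs.nonneg _))
    have hexp : 4 * j + 2 * m + 2 ≤ (4 * κ + 2 * (ρ * κ) + 2) * n := by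
      have hm'' : m ≤ ρ * (κ * n) := hm'.trans (Nat.mul_le_mul_left ρ hj)
      linarith
    rw [mul_pow, ← pow_mul, ← pow_mul]
    exact mul_le_mul (pow_le_pow_right₀ (le_max_left _ _) (by omega))
      (pow_le_pow_right₀ hβ₁ hexp) (by positivity) (by positivity)

lemma IsCFOf.wExp_two_eq_top_of_dioExp_eq_top (hξ : IsCFOf Fq ξ a)
    (hβ : ∀ n, polyAbs (a (n + 1)) ≤ β)
    (hper : ¬UltimatelyPeriodic fun n => a (n + 1)) (hdio : dioExp (fun n => a (n + 1)) = ⊤) :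
    wExp Fq 2 ξ = ⊤ := by
  have hβ₁ := (hξ.one_lt_of_forall_polyAbs_le hβ).le
  refine wExp_eq_top_of_forall_exists fun D ε hε => ?_
  set M := max 1 (laurentAbs ξ) ^ 2 * β ^ 3 with hM
  obtain ⟨s, hs⟩ := pow_unbounded_of_one_lt (M ^ D) one_lt_two
  obtain ⟨N, hN⟩ := exists_pow_lt_of_lt_one hε (by norm_num : (2⁻¹ : ℝ) < 1)
  obtain ⟨i, j, m, hij, hNm, hsm, hagree⟩ := dioExp_eq_top_iff_blocksAgree.1 hdio s N
  obtain ⟨m', hagree', hne⟩ := exists_first_disagreement hper hij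
  have hsmall := laurentAbs_evalK_coincidenceForm_le_pow hξ hagree
  have hheight : Hpoly Fq (coincidenceForm a i j) ≤ M ^ j := by
    refine (Hpoly_coincidenceForm_le_pow hξ hβ hij).trans ?_
    rw [hM, mul_pow, ← pow_mul, ← pow_mul]
    exact mul_le_mul (pow_le_pow_right₀ (le_max_left _ _) (by omega))
      (pow_le_pow_right₀ hβ₁ (by omega)) (by positivity) (by positivity)
  refine ⟨coincidenceForm a i j, natDegree_coincidenceForm_le a i j,
    evalK_coincidenceForm_ne_zero hξ hagree' hne, hsmall.trans_lt ?_, ?_⟩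
  · exact (pow_le_pow_of_le_one (by norm_num) (by norm_num) hNm).trans_lt hN
  · have hpow : Hpoly Fq (coincidenceForm a i j) ^ D ≤ 2 ^ m :=
      calc Hpoly Fq (coincidenceForm a i j) ^ D ≤ (M ^ j) ^ D :=
            pow_le_pow_left₀ (Hpoly_nonneg _) hheight D
        _ = (M ^ D) ^ j := pow_right_comm _ _ _
        _ ≤ (2 ^ s) ^ j := pow_le_pow_left₀ (by positivity) hs.le j
        _ = 2 ^ (s * j) := (pow_mul _ _ _).symm
        _ ≤ 2 ^ m := pow_le_pow_right₀ one_le_two hsm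
    calc _ ≤ (2 : ℝ) ^ m * 2⁻¹ ^ m :=
          mul_le_mul hpow hsmall (laurentAbs.nonneg _) (by positivity)
      _ = 1 := by rw [← mul_pow]; norm_num

end QuadraticExponent

theorem stmt5 (Fq : Type) [Field Fq] [Fintype Fq]
    (b : ℕ → Polynomial Fq) (hdeg : ∀ n, 1 ≤ (b n).natDegree)
    (hnup : ¬ UltimatelyPeriodic b)
    (hbdd : ∃ B : ℝ, ∀ n : ℕ, kabs Fq (polyToK Fq (b n)) ≤ B)
    (hcomp : Filter.limsup (fun n : ℕ => ((complexity b n : ℝ≥0∞)) / (n : ℝ≥0∞))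
      Filter.atTop < ⊤)
    (ξ : K Fq) (hξ : IsCFOf Fq ξ (cfA Fq b)) :
    dioExp b ≠ ⊤ ↔ ¬ (wExp Fq 2 ξ = ⊤ ∧ wExp Fq 1 ξ ≠ ⊤) := by
  obtain ⟨β, hβ⟩ := hbdd
  have hw₁ : wExp Fq 1 ξ ≠ ⊤ := (hξ.isBadlyApproximable hβ).wExp_one_ne_top
  constructor
  · rintro hdio ⟨hw₂, -⟩
    exact hξ.wExp_two_ne_top_of_dioExp_ne_top hβ hnup hcomp hdio hw₂
  · rintro hU hdio
    exact hU ⟨hξ.wExp_two_eq_top_of_dioExp_eq_top hβ hnup hdio, hw₁⟩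

end Ooto
end
end

section
/- Let P(X), Q(X) ∈ (F_q[T])[X] be non-constant polynomials of degrees m and n respectively. Let α be a root of P(X) of multiplicity t and β a root of Q(X) of multiplicity u (roots taken in the algebraic closure of F_q(T)). Assume P(β) ≠ 0. Then |P(β)| ≥ max(1, |β|)^m · H(P)^{−n/u + 1} · H(Q)^{−m/u}, and furthermore |α − β| ≥ max(1, |α|) · max(1, |β|) · H(P)^{−n/(tu)} · H(Q)^{−m/(tu)}. -/
open Polynomial Filter
open scoped ENNReal

noncomputable section

namespace Ooto

variable (Fq : Type) [Field Fq] [Fintype Fq]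

/-!
Let `S` be a subring of a nonarchimedean field all of whose nonzero elements have absolute value at
least `1`, and let `P`, `Q` have coefficients in `S`. Over the roots `b` of `Q`, the polynomial
`Res_X(Q, P + s) = lc(Q) ^ deg P * ∏ (P(b) + s)` in the variable `s` has coefficients in `S`, hence
so does its lowest nonzero term, which is `lc(Q) ^ deg P * ∏ P(b)` taken over the roots with
`P(b) ≠ 0`. So this product has absolute value at least `1`, whether or not `P` and `Q` have
a common factor. Bounding `|P(b)| ≤ H(P) max(1, |b|) ^ deg P` for all `b ≠ β` and using
`H(Q) = |lc(Q)| ∏ max(1, |b|)` (multiplicativity of the Gauss norm) gives the bound for `P(β)`.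
Bounding `|β - a| ≤ max(1, |a|) max(1, |β|)` for the roots `a ≠ α` in the factorization of `P(β)`
transfers it to `α - β`.
-/

section Inequalities

lemma prod_map_eq_pow_count_mul {ι M : Type*} [DecidableEq ι] [CommMonoid M] (s : Multiset ι)
    (f : ι → M) (a : ι) :
    (s.map f).prod = f a ^ s.count a * ((s.filter (· ≠ a)).map f).prod := by
  conv_lhs => rw [← Multiset.filter_add_not (· = a) s]
  rw [Multiset.filter_eq', Multiset.map_add, Multiset.prod_add, Multiset.map_replicate,
    Multiset.prod_replicate]

lemma pow_count_mul_prod_map_le {ι R : Type*} [DecidableEq ι] [CommSemiring R] [PartialOrder R]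
    [IsOrderedRing R] (s : Multiset ι) {f g : ι → R} (hf : ∀ x, 0 ≤ f x) (hfg : ∀ x, f x ≤ g x)
    (a : ι) :
    g a ^ s.count a * (s.map f).prod ≤ f a ^ s.count a * (s.map g).prod := by
  have hrest : ((s.filter (· ≠ a)).map f).prod ≤ ((s.filter (· ≠ a)).map g).prod :=
    Multiset.prod_map_le_prod_map₀ f g (fun x _ => hf x) fun x _ => hfg x
  rw [prod_map_eq_pow_count_mul s f a, prod_map_eq_pow_count_mul s g a, mul_left_comm]
  have hg : 0 ≤ g a := (hf a).trans (hfg a)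
  have hfa : 0 ≤ f a := hf a
  gcongr

lemma rpow_neg_div_natCast_pow {a : ℝ} (ha : 0 ≤ a) (n : ℕ) {k : ℕ} (hk : k ≠ 0) :
    (a ^ (-(n : ℝ) / k)) ^ k = (a ^ n)⁻¹ := by
  rw [← Real.rpow_mul_natCast ha, div_mul_cancel₀ _ (Nat.cast_ne_zero.mpr hk), Real.rpow_neg ha,
    Real.rpow_natCast]

lemma mul_rpow_mul_rpow_le_of_pow_le {x y a b : ℝ} (hy : 0 ≤ y) (ha : 0 < a) (hb : 0 < b)
    {m n k : ℕ} (hk : k ≠ 0) (h : x ^ k ≤ y ^ k * (a ^ n * b ^ m)) :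
    x * a ^ (-(n : ℝ) / k) * b ^ (-(m : ℝ) / k) ≤ y := by
  refine le_of_pow_le_pow_left₀ hk hy ?_
  rw [mul_pow, mul_pow, rpow_neg_div_natCast_pow ha.le n hk, rpow_neg_div_natCast_pow hb.le m hk,
    mul_assoc, ← mul_inv, ← div_eq_mul_inv]
  exact (div_le_iff₀ (by positivity)).mpr h

end Inequalities

section ReducedResultant

lemma trailingCoeff_C {R : Type*} [Semiring R] (a : R) : (C a).trailingCoeff = a := by
  rw [trailingCoeff, natTrailingDegree_C, coeff_C_zero]

lemma trailingCoeff_multiset_prod {R : Type*} [CommSemiring R] [NoZeroDivisors R]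
    (s : Multiset R[X]) :
    s.prod.trailingCoeff = (s.map trailingCoeff).prod := by
  induction s using Multiset.induction with
  | empty => simpa using trailingCoeff_C (1 : R)
  | cons p s ih => simp only [Multiset.prod_cons, Multiset.map_cons, trailingCoeff_mul, ih]

open Classical in
lemma trailingCoeff_C_add_X {R : Type*} [Semiring R] (a : R) :
    (C a + X).trailingCoeff = if a = 0 then 1 else a := by
  split_ifs with ha
  · nontriviality R
    simp [ha, trailingCoeff]
  · have hcoeff : (C a + X).coeff 0 = a := by rw [coeff_add, coeff_C_zero, coeff_X_zero, add_zero]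
    rw [trailingCoeff_eq_coeff_zero (by rwa [hcoeff]), hcoeff]

variable {R S : Type*} [CommRing R] [CommRing S] [IsDomain S]

open Classical in
/-- The part of the resultant of `q` and `p`, written as a product over the roots of a split
polynomial `q`, that comes from the roots of `q` at which `p` does not vanish. It replaces the
resultant, which is zero when `p` and `q` have a common root. -/
def reducedResultant (q p : S[X]) : S :=
  q.leadingCoeff ^ p.natDegree * (q.roots.map fun b => if p.eval b = 0 then 1 else p.eval b).prod

lemma reducedResultant_ne_zero {q : S[X]} (hq : q ≠ 0) (p : S[X]) : reducedResultant q p ≠ 0 := by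
  refine mul_ne_zero (pow_ne_zero _ (leadingCoeff_ne_zero.mpr hq)) (Multiset.prod_ne_zero ?_)
  rw [Multiset.mem_map]
  rintro ⟨b, -, hb⟩
  split_ifs at hb with h
  exacts [one_ne_zero hb, h hb]

lemma resultant_map_C_add_C_X {q : S[X]} (hq : q.Splits) (p : S[X]) :
    resultant (q.map C) (p.map C + C X) q.natDegree p.natDegree =
      C q.leadingCoeff ^ p.natDegree * (q.roots.map fun b => C (p.eval b) + X).prod := by
  have hdeg : (p.map C + C X : S[X][X]).natDegree ≤ p.natDegree := by
    rw [natDegree_add_C]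
    exact natDegree_map_le
  have h := resultant_eq_prod_eval (q.map C) (p.map C + C X) _ hdeg (hq.map C)
  rw [natDegree_map_eq_of_injective C_injective, leadingCoeff_map_of_injective C_injective,
    hq.roots_map_of_injective C_injective, Multiset.map_map] at h
  simpa using h

lemma trailingCoeff_resultant_map_C_add_C_X {q : S[X]} (hq : q.Splits) (p : S[X]) :
    (resultant (q.map C) (p.map C + C X) q.natDegree p.natDegree).trailingCoeff =
      reducedResultant q p := by
  rw [resultant_map_C_add_C_X hq, ← C_pow, trailingCoeff_mul, trailingCoeff_multiset_prod,
    trailingCoeff_C, Multiset.map_map]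
  simp only [Function.comp_def, trailingCoeff_C_add_X, reducedResultant]

lemma reducedResultant_map_mem_range (f : R →+* S) (P Q : R[X]) (hQ : (Q.map f).Splits) :
    reducedResultant (Q.map f) (P.map f) ∈ f.range := by
  set m := (Q.map f).natDegree
  set n := (P.map f).natDegree
  have hmap : (resultant (Q.map C) (P.map C + C X) m n).map f =
      resultant ((Q.map f).map C) ((P.map f).map C + C X) m n := by
    have hmapC (p : R[X]) : (p.map C).map (mapRingHom f) = (p.map f).map C := by
      rw [Polynomial.map_map, Polynomial.map_map, mapRingHom_comp_C]
    rw [← coe_mapRingHom, ← resultant_map_map, Polynomial.map_add, hmapC, hmapC, map_C,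
      coe_mapRingHom, map_X]
  rw [← trailingCoeff_resultant_map_C_add_C_X hQ, ← hmap, trailingCoeff, coeff_map]
  exact f.mem_range_self _

end ReducedResultant

section GaussNorm

lemma abv_coeff_le_gaussNorm_one {A : Type*} [Semiring A] {av : AbsoluteValue A ℝ} (p : A[X])
    (i : ℕ) : av (p.coeff i) ≤ p.gaussNorm av 1 := by
  simpa using le_gaussNorm av p zero_le_one i

lemma one_le_gaussNorm_one_map {R A : Type*} [Semiring R] [Semiring A]
    {av : AbsoluteValue A ℝ} {f : R →+* A} (hf : ∀ a, a ≠ 0 → 1 ≤ av (f a)) {P : R[X]}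
    (hP : P ≠ 0) : 1 ≤ (P.map f).gaussNorm av 1 :=
  calc 1 ≤ av (f P.leadingCoeff) := hf _ (leadingCoeff_ne_zero.mpr hP)
    _ ≤ (P.map f).gaussNorm av 1 := by
        simpa only [coeff_map, coeff_natDegree] using
          abv_coeff_le_gaussNorm_one (av := av) (P.map f) P.natDegree

lemma injective_of_one_le_abv {R A : Type*} [Ring R] [Semiring A] {av : AbsoluteValue A ℝ}
    {f : R →+* A} (hf : ∀ a, a ≠ 0 → 1 ≤ av (f a)) : Function.Injective f := by
  refine (injective_iff_map_eq_zero f).mpr fun a ha => by_contra fun h => ?_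
  exact absurd (hf a h) (by simp [ha])

lemma abv_sub_le_max_one_mul_max_one {A : Type*} [Ring A] {av : AbsoluteValue A ℝ}
    (hna : IsNonarchimedean av) (x y : A) :
    av (x - y) ≤ max 1 (av x) * max 1 (av y) := by
  have h1x : 1 ≤ max 1 (av x) := le_max_left _ _
  have h1y : 1 ≤ max 1 (av y) := le_max_left _ _
  calc av (x - y) ≤ max (av x) (av y) := by
        simpa only [sub_eq_add_neg, av.map_neg] using hna x (-y)
    _ ≤ max 1 (av x) * max 1 (av y) := max_le
        ((le_max_right _ _).trans (le_mul_of_one_le_right (zero_le_one.trans h1x) h1y))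
        ((le_max_right _ _).trans (le_mul_of_one_le_left (zero_le_one.trans h1y) h1x))

variable {A : Type*} [CommRing A] [IsDomain A] {av : AbsoluteValue A ℝ}

lemma abv_eval_le_gaussNorm_mul_pow (hna : IsNonarchimedean av) (p : A[X]) (x : A) :
    av (p.eval x) ≤ p.gaussNorm av 1 * max 1 (av x) ^ p.natDegree := by
  obtain ⟨i, hi, h⟩ := IsNonarchimedean.finset_image_add_of_nonempty (f := av) hna
    (fun i => p.coeff i * x ^ i) (t := Finset.range (p.natDegree + 1)) ⟨0, by simp⟩
  have hi' : i ≤ p.natDegree := Nat.lt_succ_iff.mp (Finset.mem_range.mp hi)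
  calc av (p.eval x) ≤ av (p.coeff i) * av x ^ i := by
        rw [eval_eq_sum_range, ← map_pow, ← map_mul]
        exact h
    _ ≤ p.gaussNorm av 1 * max 1 (av x) ^ i := by
        gcongr
        exacts [gaussNorm_nonneg av p zero_le_one, abv_coeff_le_gaussNorm_one p i, le_max_right _ _]
    _ ≤ p.gaussNorm av 1 * max 1 (av x) ^ p.natDegree := by
        gcongr
        exacts [gaussNorm_nonneg av p zero_le_one, le_max_left _ _]

lemma gaussNorm_one_X_sub_C (a : A) : (X - C a).gaussNorm av 1 = max 1 (av a) := by
  apply le_antisymm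
  · obtain ⟨i, hi⟩ := exists_eq_gaussNorm av 1 (X - C a)
    rw [hi]
    rcases i with _ | _ | i <;> simp [coeff_X, coeff_C]
  · apply max_le
    · have h := abv_coeff_le_gaussNorm_one (av := av) (X - C a) 1
      rwa [coeff_sub, coeff_X_one, coeff_C_succ, sub_zero, av.map_one] at h
    · have h := abv_coeff_le_gaussNorm_one (av := av) (X - C a) 0
      rwa [coeff_sub, coeff_X_zero, coeff_C_zero, zero_sub, av.map_neg] at h

lemma gaussNorm_one_eq_mul_prod_roots (hna : IsNonarchimedean av) {p : A[X]} (hp : p.Splits) :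
    p.gaussNorm av 1 = av p.leadingCoeff * (p.roots.map fun a => max 1 (av a)).prod := by
  have hprod (s : Multiset A) :
      ((s.map fun a => X - C a).prod).gaussNorm av 1 = (s.map fun a => max 1 (av a)).prod := by
    induction s using Multiset.induction with
    | empty => simpa using gaussNorm_C av 1 (1 : A)
    | cons a s ih =>
      simp only [Multiset.map_cons, Multiset.prod_cons, gaussNorm_mul hna zero_lt_one, ih,
        gaussNorm_one_X_sub_C]
  conv_lhs => rw [hp.eq_prod_roots]
  rw [gaussNorm_mul hna zero_lt_one, gaussNorm_C, hprod]

end GaussNorm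

section Liouville

lemma rootMultiplicity_map_ne_zero {R S : Type*} [CommRing R] [CommRing S] {f : R →+* S}
    (hf : Function.Injective f) {P : R[X]} (hP : P ≠ 0) {a : S} (ha : P.eval₂ f a = 0) :
    (P.map f).rootMultiplicity a ≠ 0 :=
  ((rootMultiplicity_pos ((Polynomial.map_ne_zero_iff hf).mpr hP)).mpr
    ((eval_map f a).trans ha)).ne'

variable {A : Type*} [CommRing A] [IsDomain A] {av : AbsoluteValue A ℝ}

lemma one_le_abv_reducedResultant_map {R : Type*} [CommRing R] {f : R →+* A}
    (hf : ∀ a, a ≠ 0 → 1 ≤ av (f a)) {Q : R[X]} (hQ0 : Q ≠ 0) (hQ : (Q.map f).Splits)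
    (P : R[X]) : 1 ≤ av (reducedResultant (Q.map f) (P.map f)) := by
  obtain ⟨r, hr⟩ := reducedResultant_map_mem_range f P Q hQ
  have hQm : Q.map f ≠ 0 := (Polynomial.map_ne_zero_iff (injective_of_one_le_abv hf)).mpr hQ0
  rw [← hr]
  refine hf r ?_
  rintro rfl
  exact reducedResultant_ne_zero hQm (P.map f) (by rw [← hr, map_zero])

lemma pow_rootMultiplicity_le_abv_eval_pow (hna : IsNonarchimedean av) {p q : A[X]}
    (hq : q.Splits) (hp : 1 ≤ p.gaussNorm av 1) (hres : 1 ≤ av (reducedResultant q p)) {β : A}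
    (hpβ : p.eval β ≠ 0) :
    (p.gaussNorm av 1 * max 1 (av β) ^ p.natDegree) ^ q.rootMultiplicity β ≤
      av (p.eval β) ^ q.rootMultiplicity β *
        (p.gaussNorm av 1 ^ q.natDegree * q.gaussNorm av 1 ^ p.natDegree) := by
  classical
  set H := p.gaussNorm av 1
  set m := p.natDegree
  let w (b : A) : ℝ := av (if p.eval b = 0 then 1 else p.eval b)
  let g (b : A) : ℝ := H * max 1 (av b) ^ m
  have hwg (b : A) : w b ≤ g b := by
    by_cases hb : p.eval b = 0
    · simpa [w, hb] using one_le_mul_of_one_le_of_one_le hp (one_le_pow₀ (le_max_left 1 (av b)))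
    · simpa [w, hb] using abv_eval_le_gaussNorm_mul_pow hna p b
  have hres' : 1 ≤ av q.leadingCoeff ^ m * (q.roots.map w).prod := by
    simpa [reducedResultant, map_multiset_prod, Function.comp_def] using hres
  have hroots : g β ^ q.rootMultiplicity β * (q.roots.map w).prod ≤
      av (p.eval β) ^ q.rootMultiplicity β * (q.roots.map g).prod := by
    simpa [w, hpβ] using pow_count_mul_prod_map_le q.roots (fun b => av.nonneg _) hwg β
  have hheight : av q.leadingCoeff ^ m * (q.roots.map g).prod =
      H ^ q.natDegree * q.gaussNorm av 1 ^ m := by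
    rw [gaussNorm_one_eq_mul_prod_roots hna hq, Multiset.prod_map_mul, Multiset.map_const',
      Multiset.prod_replicate, Multiset.prod_map_pow, ← hq.natDegree_eq_card_roots]
    ring
  have hg : 0 ≤ g β := (av.nonneg _).trans (hwg β)
  calc g β ^ q.rootMultiplicity β
      ≤ g β ^ q.rootMultiplicity β * (av q.leadingCoeff ^ m * (q.roots.map w).prod) :=
        le_mul_of_one_le_right (pow_nonneg hg _) hres'
    _ ≤ av q.leadingCoeff ^ m * (av (p.eval β) ^ q.rootMultiplicity β * (q.roots.map g).prod) := by
        rw [mul_left_comm]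
        gcongr
    _ = _ := by rw [mul_left_comm, hheight]

lemma pow_rootMultiplicity_mul_abv_eval_le (hna : IsNonarchimedean av) {p : A[X]} (hp : p.Splits)
    (α β : A) :
    (max 1 (av α) * max 1 (av β)) ^ p.rootMultiplicity α * av (p.eval β) ≤
      av (α - β) ^ p.rootMultiplicity α * (p.gaussNorm av 1 * max 1 (av β) ^ p.natDegree) := by
  classical
  let g (a : A) : ℝ := max 1 (av a) * max 1 (av β)
  have heval : av (p.eval β) = av p.leadingCoeff * (p.roots.map fun a => av (a - β)).prod := by
    conv_lhs => rw [hp.eq_prod_roots]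
    simp [eval_multiset_prod, map_multiset_prod, av.map_sub β]
  have hroots : g α ^ p.rootMultiplicity α * (p.roots.map fun a => av (a - β)).prod ≤
      av (α - β) ^ p.rootMultiplicity α * (p.roots.map g).prod := by
    rw [← count_roots]
    exact pow_count_mul_prod_map_le p.roots (fun a => av.nonneg _)
      (fun a => abv_sub_le_max_one_mul_max_one hna a β) α
  have hheight : av p.leadingCoeff * (p.roots.map g).prod =
      p.gaussNorm av 1 * max 1 (av β) ^ p.natDegree := by
    rw [gaussNorm_one_eq_mul_prod_roots hna hp, Multiset.prod_map_mul, Multiset.map_const',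
      Multiset.prod_replicate, ← hp.natDegree_eq_card_roots, mul_assoc]
  calc g α ^ p.rootMultiplicity α * av (p.eval β)
      ≤ av p.leadingCoeff * (av (α - β) ^ p.rootMultiplicity α * (p.roots.map g).prod) := by
        rw [heval, mul_left_comm]
        gcongr
    _ = _ := by rw [mul_left_comm, hheight]

lemma max_mul_max_pow_le_abv_sub_pow (hna : IsNonarchimedean av) {p q : A[X]} (hp : p.Splits)
    (hq : q.Splits) (hp1 : 1 ≤ p.gaussNorm av 1) (hres : 1 ≤ av (reducedResultant q p)) (α : A)
    {β : A} (hpβ : p.eval β ≠ 0) :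
    (max 1 (av α) * max 1 (av β)) ^ (p.rootMultiplicity α * q.rootMultiplicity β) ≤
      av (α - β) ^ (p.rootMultiplicity α * q.rootMultiplicity β) *
        (p.gaussNorm av 1 ^ q.natDegree * q.gaussNorm av 1 ^ p.natDegree) := by
  have hβ := pow_rootMultiplicity_le_abv_eval_pow hna hq hp1 hres hpβ
  have hα := pow_rootMultiplicity_mul_abv_eval_le hna hp α β
  set t := p.rootMultiplicity α
  set u := q.rootMultiplicity β
  have hV : 0 < av (p.eval β) ^ u := pow_pos (av.pos hpβ) u
  refine le_of_mul_le_mul_right ?_ hV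
  calc (max 1 (av α) * max 1 (av β)) ^ (t * u) * av (p.eval β) ^ u
      = ((max 1 (av α) * max 1 (av β)) ^ t * av (p.eval β)) ^ u := by rw [mul_pow _ _ u, pow_mul]
    _ ≤ (av (α - β) ^ t * (p.gaussNorm av 1 * max 1 (av β) ^ p.natDegree)) ^ u := by gcongr
    _ = av (α - β) ^ (t * u) * (p.gaussNorm av 1 * max 1 (av β) ^ p.natDegree) ^ u := by
        rw [mul_pow _ _ u, pow_mul]
    _ ≤ av (α - β) ^ (t * u) * (av (p.eval β) ^ u *
          (p.gaussNorm av 1 ^ q.natDegree * q.gaussNorm av 1 ^ p.natDegree)) := by gcongr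
    _ = _ := by ring

end Liouville

theorem stmt6_general {R A : Type*} [CommRing R] [CommRing A] [IsDomain A]
    {av : AbsoluteValue A ℝ} (hna : IsNonarchimedean av) {f : R →+* A}
    (hf : ∀ a, a ≠ 0 → 1 ≤ av (f a)) {P Q : R[X]} (hP : (P.map f).Splits)
    (hQ : (Q.map f).Splits) (hQ0 : Q ≠ 0) {α β : A} {t u : ℕ}
    (hα : P.eval₂ f α = 0) (ht : t = (P.map f).rootMultiplicity α)
    (hβ : Q.eval₂ f β = 0) (hu : u = (Q.map f).rootMultiplicity β) (hPβ : P.eval₂ f β ≠ 0) :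
    max 1 (av β) ^ (P.natDegree : ℝ) *
        (P.map f).gaussNorm av 1 ^ (-(Q.natDegree : ℝ) / (u : ℝ) + 1) *
        (Q.map f).gaussNorm av 1 ^ (-(P.natDegree : ℝ) / (u : ℝ)) ≤ av (P.eval₂ f β) ∧
    max 1 (av α) * max 1 (av β) *
        (P.map f).gaussNorm av 1 ^ (-(Q.natDegree : ℝ) / ((t : ℝ) * (u : ℝ))) *
        (Q.map f).gaussNorm av 1 ^ (-(P.natDegree : ℝ) / ((t : ℝ) * (u : ℝ))) ≤ av (α - β) := by
  have hinj : Function.Injective f := injective_of_one_le_abv hf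
  have hP0 : P ≠ 0 := by rintro rfl; exact hPβ (eval₂_zero f β)
  have ht0 : t ≠ 0 := ht ▸ rootMultiplicity_map_ne_zero hinj hP0 hα
  have hu0 : u ≠ 0 := hu ▸ rootMultiplicity_map_ne_zero hinj hQ0 hβ
  have hP1 := one_le_gaussNorm_one_map hf hP0
  have hQ1 := one_le_gaussNorm_one_map hf hQ0
  have hres := one_le_abv_reducedResultant_map hf hQ0 hQ P
  rw [← eval_map] at hPβ ⊢
  have hβ' := pow_rootMultiplicity_le_abv_eval_pow hna hQ hP1 hres hPβ
  have hα' := max_mul_max_pow_le_abv_sub_pow hna hP hQ hP1 hres α hPβ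
  rw [natDegree_map_eq_of_injective hinj, natDegree_map_eq_of_injective hinj, ← hu] at hβ' hα'
  rw [← ht] at hα'
  have hP_pos := zero_lt_one.trans_le hP1
  have hQ_pos := zero_lt_one.trans_le hQ1
  constructor
  · rw [Real.rpow_natCast, Real.rpow_add_one hP_pos.ne', ← mul_assoc,
      mul_right_comm _ _ ((P.map f).gaussNorm av 1), mul_comm _ ((P.map f).gaussNorm av 1)]
    exact mul_rpow_mul_rpow_le_of_pow_le (av.nonneg _) hP_pos hQ_pos hu0 hβ'
  · rw [← Nat.cast_mul]
    exact mul_rpow_mul_rpow_le_of_pow_le (av.nonneg _) hP_pos hQ_pos (mul_ne_zero ht0 hu0) hα'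

section LaurentSeries

variable {Fq : Type} [Field Fq]

lemma TT_pow (k : ℕ) : TT Fq ^ k = HahnSeries.single (-(k : ℤ)) 1 := by
  simp [TT, HahnSeries.single_pow]

lemma coeff_polyToK (a : Fq[X]) (n : ℕ) : (polyToK Fq a).coeff (-(n : ℤ)) = a.coeff n := by
  induction a using Polynomial.induction_on' with
  | add p q hp hq => rw [map_add, HahnSeries.coeff_add, hp, hq, coeff_add]
  | monomial k c =>
    rw [polyToK, coe_eval₂RingHom, eval₂_monomial, TT_pow, HahnSeries.C_apply,
      HahnSeries.single_mul_single, coeff_monomial, HahnSeries.coeff_single]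
    simp [eq_comm]

variable [Fintype Fq] {v : L Fq → ℝ}

lemma one_le_kabs_polyToK {a : Fq[X]} (ha : a ≠ 0) : 1 ≤ kabs Fq (polyToK Fq a) := by
  have hcoeff : (polyToK Fq a).coeff (-(a.natDegree : ℤ)) ≠ 0 := by
    rwa [coeff_polyToK, coeff_natDegree, leadingCoeff_ne_zero]
  have hne : polyToK Fq a ≠ 0 := HahnSeries.ne_zero_of_coeff_ne_zero hcoeff
  have horder : (polyToK Fq a).order ≤ -(a.natDegree : ℤ) :=
    HahnSeries.order_le_of_coeff_ne_zero hcoeff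
  rw [kabs, if_neg hne]
  exact one_le_zpow₀ (mod_cast Fintype.card_pos) (by omega)

/-- An extension `v` of `kabs` to the algebraic closure, bundled as an absolute value so that the
theory of Gauss norms applies to it. -/
def IsAbsExt.toAbsoluteValue (hv : IsAbsExt Fq v) : AbsoluteValue (L Fq) ℝ where
  toFun := v
  map_mul' := hv.map_mul
  nonneg' := hv.nonneg
  eq_zero' := hv.eq_zero_iff
  add_le' x y := (hv.add_le x y).trans (max_le_add_of_nonneg (hv.nonneg x) (hv.nonneg y))

lemma IsAbsExt.one_le_apply_φ (hv : IsAbsExt Fq v) {a : Fq[X]} (ha : a ≠ 0) : 1 ≤ v (φ Fq a) :=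
  (one_le_kabs_polyToK ha).trans_eq (hv.extends_kabs _).symm

lemma Hpoly_eq_gaussNorm_s6 (hv : IsAbsExt Fq v) (P : Fq[X][X]) :
    Hpoly Fq P = (P.map (φ Fq)).gaussNorm hv.toAbsoluteValue 1 := by
  rw [← gaussNorm_coe_powerSeries _ _ zero_le_one, PowerSeries.gaussNorm_eq]
  refine iSup_congr fun i => ?_
  rw [coeff_coe, coeff_map, one_pow, mul_one]
  exact (hv.extends_kabs _).symm

end LaurentSeries

theorem stmt6 (Fq : Type) [Field Fq] [Fintype Fq]
    (v : L Fq → ℝ) (hv : IsAbsExt Fq v)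
    (P Q : Polynomial (Polynomial Fq)) (hP : 0 < P.natDegree) (hQ : 0 < Q.natDegree)
    (α β : L Fq) (t u : ℕ)
    (hαroot : evalL Fq P α = 0) (ht : t = Polynomial.rootMultiplicity α (P.map (φ Fq)))
    (hβroot : evalL Fq Q β = 0) (hu : u = Polynomial.rootMultiplicity β (Q.map (φ Fq)))
    (hPβ : evalL Fq P β ≠ 0) :
    max 1 (v β) ^ (P.natDegree : ℝ) * Hpoly Fq P ^ (-(Q.natDegree : ℝ) / (u : ℝ) + 1) *
        Hpoly Fq Q ^ (-(P.natDegree : ℝ) / (u : ℝ)) ≤ v (evalL Fq P β) ∧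
    max 1 (v α) * max 1 (v β) * Hpoly Fq P ^ (-(Q.natDegree : ℝ) / ((t : ℝ) * (u : ℝ))) *
        Hpoly Fq Q ^ (-(P.natDegree : ℝ) / ((t : ℝ) * (u : ℝ))) ≤ v (α - β) := by
  rw [Hpoly_eq_gaussNorm_s6 hv, Hpoly_eq_gaussNorm_s6 hv]
  exact stmt6_general (av := hv.toAbsoluteValue) hv.add_le (fun _ => hv.one_le_apply_φ)
    (IsAlgClosed.splits _) (IsAlgClosed.splits _) (ne_zero_of_natDegree_gt hQ) hαroot ht hβroot hu
    hPβ

end Ooto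
end
end
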